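/- arXiv:1912.09815 — 3 statements merged into one kernel-verified Lean document; each statement's English description precedes it below -/
import Mathlib

section
/- Let G be a countable abelian group of finite exponent. Then the following are equivalent: (1) there exists a pseudo-Siggers polymorphism of (G, ≠), i.e., an additive homomorphism s : (Fin 6 → G) →+ G (tuples with pointwise addition) that preserves ≠, together with injective additive endomorphisms e₁, e₂ : G →+ G such that e₁(s(x,y,x,z,y,z)) = e₂(s(y,x,z,x,z,y)) for all x,y,z ∈ G; (2) there exists n ≥ 1 such that G is bi-embeddable with ⨁_ℕ ZMod n, or G is bi-embeddable with (⨁_ℕ ZMod n) × ZMod (2*n). -/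
/-- `G` carries a pseudo-Siggers operation for the relation `≠`. -/
def HasPseudoSiggers (G : Type*) [AddCommGroup G] : Prop :=
  ∃ (s : (Fin 6 → G) →+ G) (e₁ e₂ : G →+ G),
    (∀ p q : Fin 6 → G, (∀ i, p i ≠ q i) → s p ≠ s q) ∧
    Function.Injective e₁ ∧ Function.Injective e₂ ∧
    (∀ x y z : G, e₁ (s ![x, y, x, z, y, z]) = e₂ (s ![y, x, z, x, z, y]))

/-- An additive group killed by `n` in which the obvious necessary condition for divisibility by a
divisor of `n` is sufficient; equivalently, an injective `ZMod n`-module. -/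
structure IsDivisibleMod (n : ℕ) (Q : Type*) [AddCommGroup Q] : Prop where
  nsmul_eq_zero : ∀ q : Q, n • q = 0
  exists_nsmul_eq : ∀ d e : ℕ, d * e = n → ∀ q : Q, e • q = 0 → ∃ q', d • q' = q

theorem isDivisibleMod_zmod (n : ℕ) [NeZero n] : IsDivisibleMod n (ZMod n) where
  nsmul_eq_zero q := by simp
  exists_nsmul_eq d e hde q hq := by
    have hn := NeZero.ne n
    have he : 0 < e := Nat.pos_of_ne_zero (by rintro rfl; simp at hde; exact hn hde.symm)
    rw [← ZMod.natCast_zmod_val q, nsmul_eq_mul, ← Nat.cast_mul,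
      ZMod.natCast_eq_zero_iff] at hq
    have hq' : e * d ∣ e * q.val := by rwa [mul_comm e d, hde]
    obtain ⟨k, hk⟩ := Nat.dvd_of_mul_dvd_mul_left he hq'
    refine ⟨(k : ZMod n), ?_⟩
    rw [nsmul_eq_mul, ← Nat.cast_mul]
    conv_rhs => rw [← ZMod.natCast_zmod_val q]
    rw [← hk]

theorem IsDivisibleMod.finsupp {n : ℕ} {Q : Type*} [AddCommGroup Q] (hQ : IsDivisibleMod n Q)
    (ι : Type*) : IsDivisibleMod n (ι →₀ Q) where
  nsmul_eq_zero q := by ext i; simp [hQ.nsmul_eq_zero]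
  exists_nsmul_eq d e hde q hq := by
    classical
    have h (c : Q) : ∃ c', (c = 0 → c' = 0) ∧ (e • c = 0 → d • c' = c) := by
      by_cases hc : c = 0
      · exact ⟨0, by simp [hc]⟩
      · by_cases hec : e • c = 0
        · obtain ⟨c', hc'⟩ := hQ.exists_nsmul_eq d e hde c hec
          exact ⟨c', by simp [hc], fun _ => hc'⟩
        · exact ⟨0, by simp [hec]⟩
    choose g hg₀ hg using h
    refine ⟨q.mapRange g (hg₀ 0 rfl), ?_⟩
    ext i
    simpa using hg (q i) (by simpa using DFunLike.congr_fun hq i)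

theorem IsDivisibleMod.baer {n : ℕ} {Q : Type*} [AddCommGroup Q] [Module (ZMod n) Q]
    (hQ : IsDivisibleMod n Q) : Module.Baer (ZMod n) Q := by
  intro I g
  obtain ⟨d, hd⟩ : ∃ d : ℕ, Ideal.span {(d : ℤ)} = I.comap (Int.castRingHom (ZMod n)) := by
    obtain ⟨a, ha⟩ := (IsPrincipalIdealRing.principal
      (I.comap (Int.castRingHom (ZMod n)))).principal
    exact ⟨a.natAbs, by rw [ha, Int.span_natAbs]⟩
  have hmem (z : ℤ) : (z : ZMod n) ∈ I ↔ (d : ℤ) ∣ z := by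
    rw [← Ideal.mem_span_singleton, hd, Ideal.mem_comap]; rfl
  have hdI : ((d : ℤ) : ZMod n) ∈ I := (hmem d).2 dvd_rfl
  obtain ⟨e, he⟩ : d ∣ n := by
    rw [← Int.natCast_dvd_natCast, ← hmem]
    simp
  obtain ⟨q', hq'⟩ := hQ.exists_nsmul_eq d e he.symm (g ⟨_, hdI⟩) (by
    rw [← map_nsmul]
    convert map_zero g
    ext
    change e • ((d : ℤ) : ZMod n) = 0
    rw [Int.cast_natCast, nsmul_eq_mul, ← Nat.cast_mul, mul_comm, ← he, ZMod.natCast_self])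
  refine ⟨LinearMap.toSpanSingleton (ZMod n) Q q', fun x hx => ?_⟩
  obtain ⟨z, rfl⟩ := ZMod.intCast_surjective x
  obtain ⟨k, rfl⟩ := (hmem z).1 hx
  have : (⟨((d * k : ℤ) : ZMod n), hx⟩ : I) = (k : ZMod n) • ⟨((d : ℤ) : ZMod n), hdI⟩ := by
    ext
    simp [mul_comm]
  rw [this, map_smul, ← hq']
  simp [mul_comm, mul_smul, Nat.cast_smul_eq_nsmul]

theorem IsDivisibleMod.exists_extension {n : ℕ} {Q A B : Type} [AddCommGroup Q] [AddCommGroup A]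
    [AddCommGroup B] (hQ : IsDivisibleMod n Q) (hA : ∀ a : A, n • a = 0) (i : B →+ A)
    (hi : Function.Injective i) (φ : B →+ Q) : ∃ ψ : A →+ Q, ∀ b, ψ (i b) = φ b := by
  have hB (b : B) : n • b = 0 := hi (by rw [map_nsmul, hA, map_zero])
  let := AddCommGroup.zmodModule hA
  let := AddCommGroup.zmodModule hB
  let := AddCommGroup.zmodModule hQ.nsmul_eq_zero
  have := hQ.baer.injective
  obtain ⟨h, hh⟩ := this.out (i.toZModLinearMap n) hi (φ.toZModLinearMap n)
  exact ⟨h.toAddMonoidHom, hh⟩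

theorem HasPseudoSiggers.of_retract {G M : Type*} [AddCommGroup G] [AddCommGroup M]
    (hM : HasPseudoSiggers M) (f : G →+ M) (hf : Function.Injective f) (g : M →+ G) (r : G →+ M)
    (hr : ∀ m, r (g m) = m) : HasPseudoSiggers G := by
  obtain ⟨s, e₁, e₂, hs, he₁, he₂, he⟩ := hM
  let E (e : M →+ M) : G →+ G := g.comp (e.comp r) + (AddMonoidHom.id G - g.comp r)
  have hE (e : M →+ M) (a : G) : E e a = g (e (r a)) + (a - g (r a)) := rfl
  have hEg (e : M →+ M) (m : M) : E e (g m) = g (e m) := by simp [hE, hr]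
  have hEinj (e : M →+ M) (h : Function.Injective e) : Function.Injective (E e) := by
    rw [injective_iff_map_eq_zero]
    intro a ha
    rw [hE] at ha
    have h₁ : e (r a) = 0 := by simpa [hr] using congrArg r ha
    have h₂ : r a = 0 := (injective_iff_map_eq_zero e).1 h _ h₁
    simpa [h₂] using ha
  let F : (Fin 6 → G) →+ (Fin 6 → M) := f.compLeft (Fin 6)
  have hF (a b c d e' k : G) : F ![a, b, c, d, e', k] = ![f a, f b, f c, f d, f e', f k] := by
    ext i; fin_cases i <;> rfl
  refine ⟨g.comp (s.comp F), E e₁, E e₂, fun p q hpq h => ?_, hEinj _ he₁, hEinj _ he₂, ?_⟩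
  · exact hs (F p) (F q) (fun i h => hpq i (hf h)) ((Function.LeftInverse.injective hr) h)
  · intro x y z
    simp only [AddMonoidHom.comp_apply, hF, hEg, he]

/-- The operation is `(k, c) ↦ (t (k, ρ c), c₀ + c₂ + c₄)`: the first component determines the
arguments up to the kernel of `ρ`. -/
theorem hasPseudoSiggers_prod {K C : Type*} [AddCommGroup K] [AddCommGroup C]
    (t : (Fin 6 → K × K) ≃+ K) (ρ : C →+ K) (δ : K →+ C) (hδρ : ∀ c, δ (ρ c) = c + c)
    (hρ : ∀ a b c, ρ a = 0 → ρ b = 0 → ρ c = 0 → a ≠ 0 → b ≠ 0 → c ≠ 0 → a + b + c ≠ 0) :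
    HasPseudoSiggers (K × C) := by
  let s : (Fin 6 → K × C) →+ K × C :=
    { toFun := fun p => (t fun i => ((p i).1, ρ (p i).2), (p 0).2 + (p 2).2 + (p 4).2)
      map_zero' := by
        simp only [Pi.zero_apply, Prod.fst_zero, Prod.snd_zero, map_zero, add_zero]
        exact Prod.ext (map_zero t) rfl
      map_add' := fun p q => by
        refine Prod.ext ?_ ?_
        · simp only [Prod.fst_add, ← map_add]
          congr 1
          ext i <;> simp
        · simp only [Prod.snd_add, Pi.add_apply]
          abel }
  have hs (p) : s p = (t fun i => ((p i).1, ρ (p i).2), (p 0).2 + (p 2).2 + (p 4).2) := rfl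
  let φ₁ : (Fin 6 → K × K) →+ (Fin 6 → K × K) :=
    { toFun := fun p => ![p 0, p 1, p 3, p 2 - p 0, p 4 - p 1, p 5 - p 3]
      map_zero' := by ext i <;> fin_cases i <;> simp
      map_add' := fun p q => by
        funext i; fin_cases i <;> simp <;> abel }
  let φ₂ : (Fin 6 → K × K) →+ (Fin 6 → K × K) :=
    { toFun := fun p => ![p 1, p 0, p 2, p 3 - p 1, p 4 - p 2, p 5 - p 0]
      map_zero' := by ext i <;> fin_cases i <;> simp
      map_add' := fun p q => by
        funext i; fin_cases i <;> simp <;> abel }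
  have hφ₁ (p) : φ₁ p = ![p 0, p 1, p 3, p 2 - p 0, p 4 - p 1, p 5 - p 3] := rfl
  have hφ₂ (p) : φ₂ p = ![p 1, p 0, p 2, p 3 - p 1, p 4 - p 2, p 5 - p 0] := rfl
  have hφ₁i : Function.Injective φ₁ := by
    rw [injective_iff_map_eq_zero]
    intro p hp
    rw [hφ₁] at hp
    have h (i) := congrFun hp i
    have h0 : p 0 = 0 := h 0
    have h1 : p 1 = 0 := h 1
    have h2 : p 3 = 0 := h 2
    have h3 : p 2 - p 0 = 0 := h 3
    have h4 : p 4 - p 1 = 0 := h 4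
    have h5 : p 5 - p 3 = 0 := h 5
    rw [h0, sub_zero] at h3
    rw [h1, sub_zero] at h4
    rw [h2, sub_zero] at h5
    funext i; fin_cases i <;> assumption
  have hφ₂i : Function.Injective φ₂ := by
    rw [injective_iff_map_eq_zero]
    intro p hp
    rw [hφ₂] at hp
    have h (i) := congrFun hp i
    have h0 : p 1 = 0 := h 0
    have h1 : p 0 = 0 := h 1
    have h2 : p 2 = 0 := h 2
    have h3 : p 3 - p 1 = 0 := h 3
    have h4 : p 4 - p 2 = 0 := h 4
    have h5 : p 5 - p 0 = 0 := h 5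
    rw [h0, sub_zero] at h3
    rw [h2, sub_zero] at h4
    rw [h1, sub_zero] at h5
    funext i; fin_cases i <;> assumption
  let E (φ : (Fin 6 → K × K) →+ (Fin 6 → K × K)) (i : Fin 6) : K × C →+ K × C :=
    { toFun := fun a => (t (φ (t.symm a.1)), a.2 - δ (t.symm a.1 i).2)
      map_zero' := by simp
      map_add' := fun a b => by
        refine Prod.ext (by simp) ?_
        simp only [Prod.fst_add, Prod.snd_add, map_add, Pi.add_apply]
        abel }
  have hE (φ i a) : E φ i a = (t (φ (t.symm a.1)), a.2 - δ (t.symm a.1 i).2) := rfl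
  have hEi (φ : (Fin 6 → K × K) →+ (Fin 6 → K × K)) (i)
      (hφ : Function.Injective φ) : Function.Injective (E φ i) := by
    rw [injective_iff_map_eq_zero]
    rintro ⟨k, c⟩ h
    rw [hE, Prod.mk_eq_zero] at h
    obtain ⟨h₁, h₂⟩ := h
    have hk : k = 0 := by
      refine (injective_iff_map_eq_zero t.symm).1 t.symm.injective _ ?_
      refine (injective_iff_map_eq_zero φ).1 hφ _ ?_
      exact (injective_iff_map_eq_zero t).1 t.injective _ h₁
    subst hk
    simpa using h₂
  refine ⟨s, E φ₁ 0, E φ₂ 2, fun p q hpq h => ?_, hEi _ _ hφ₁i, hEi _ _ hφ₂i, ?_⟩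
  · have h' : s (p - q) = 0 := by rw [map_sub, h, sub_self]
    rw [hs, Prod.mk_eq_zero] at h'
    obtain ⟨h₁, h₂⟩ := h'
    have h₃ := (injective_iff_map_eq_zero t).1 t.injective _ h₁
    have h₄ (i) : ((p - q) i).1 = 0 ∧ ρ ((p - q) i).2 = 0 := by
      have := congrFun h₃ i
      rwa [Pi.zero_apply, Prod.mk_eq_zero] at this
    have h₅ (i) : ((p - q) i).2 ≠ 0 := fun h =>
      hpq i (sub_eq_zero.1 (Prod.ext (h₄ i).1 h))
    exact hρ _ _ _ (h₄ 0).2 (h₄ 2).2 (h₄ 4).2 (h₅ 0) (h₅ 2) (h₅ 4) h₂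
  · intro x y z
    rw [hE, hE, hs, hs]
    refine Prod.ext ?_ ?_
    · simp only [AddEquiv.symm_apply_apply]
      congr 1
      rw [hφ₁, hφ₂]
      funext i; fin_cases i <;> simp
    · simp [hδρ]

/-- If no map `s (0, …, v, …, 0)` had trivial kernel on `W`, one could kill a tuple of nonzero
elements; if one of them does, say the `j`-th, then `s` depends only on its `j`-th argument. -/
theorem card_le_two_of_pseudoSiggers {G : Type*} [AddCommGroup G] (s : (Fin 6 → G) →+ G)
    (e₁ e₂ : G →+ G) (hs : ∀ p q : Fin 6 → G, (∀ i, p i ≠ q i) → s p ≠ s q)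
    (he₁ : Function.Injective e₁)
    (he : ∀ x y z : G, e₁ (s ![x, y, x, z, y, z]) = e₂ (s ![y, x, z, x, z, y]))
    (W : AddSubgroup G) [Finite W] (hW : ∀ p : Fin 6 → G, (∀ i, p i ∈ W) → s p ∈ W) :
    Nat.card W ≤ 2 := by
  classical
  by_contra! hcard
  have hs0 (p : Fin 6 → G) (hp : ∀ i, p i ≠ 0) : s p ≠ 0 := by
    simpa using hs p 0 hp
  have hsum (p : Fin 6 → G) : s p = ∑ i, s (Pi.single i (p i)) := by
    rw [← map_sum, Finset.univ_sum_single]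
  have havoid (a b : G) : ∃ v ∈ W, v ≠ a ∧ v ≠ b := by
    by_contra! h
    have hsub : (W : Set G) ⊆ ({a, b} : Set G) := by
      intro v hv
      by_cases hva : v = a
      · exact Or.inl hva
      · exact Or.inr (h v hv hva)
    have h₁ := Set.ncard_le_ncard hsub (Set.toFinite _)
    have h₂ : ({a, b} : Set G).ncard ≤ 2 :=
      (Set.ncard_insert_le a {b}).trans_eq (by rw [Set.ncard_singleton])
    have h₃ : Nat.card W = (W : Set G).ncard := rfl
    omega
  obtain ⟨j, hj⟩ : ∃ j, ∀ v ∈ W, s (Pi.single j v) = 0 → v = 0 := by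
    by_contra! h
    choose d _ hd hd0 using h
    exact hs0 d hd0 (by rw [hsum]; exact Finset.sum_eq_zero fun i _ => hd i)
  have hsingle (i : Fin 6) {v : G} (hv : v ∈ W) (k : Fin 6) :
      (Pi.single i v : Fin 6 → G) k ∈ W := by
    by_cases hk : k = i
    · subst hk; simpa using hv
    · simp [hk, W.zero_mem]
  let σ : W →+ W :=
    { toFun := fun v => ⟨s (Pi.single j v), hW _ (hsingle j v.2)⟩
      map_zero' := by ext; simp
      map_add' := fun a b => by ext; simp [Pi.single_add] }
  have hσ : Function.Surjective σ := by
    refine Finite.injective_iff_surjective.1 ((injective_iff_map_eq_zero σ).2 fun v hv => ?_)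
    exact Subtype.ext (hj v v.2 (congrArg Subtype.val hv))
  have hzero (d : Fin 6 → G) (hd : ∀ i, d i ∈ W) (hd0 : ∀ i, i ≠ j → d i ≠ 0) (hdj : d j = 0) :
      s d = 0 := by
    obtain ⟨⟨w, hw⟩, hσw⟩ := hσ ⟨-s d, W.neg_mem (hW d hd)⟩
    have hw' : s (Pi.single j w) = -s d := congrArg Subtype.val hσw
    by_cases hw0 : w = 0
    · simpa [hw0] using hw'.symm
    · exfalso
      refine hs0 (d + Pi.single j w) (fun i => ?_) (by rw [map_add, hw', add_neg_cancel])
      by_cases hi : i = j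
      · subst hi; simpa [hdj] using hw0
      · simpa [hi] using hd0 i hi
  have hother (i : Fin 6) (hi : i ≠ j) (v : G) (hv : v ∈ W) : s (Pi.single i v) = 0 := by
    obtain ⟨u, hu, hu0, huv⟩ := havoid 0 (-v)
    let d : Fin 6 → G := fun k => if k = j then 0 else u
    have hdW (k) : d k ∈ W := by
      by_cases hk : k = j <;> simp [d, hk, hu, W.zero_mem]
    have h₁ : s d = 0 := hzero d hdW (fun k hk => by simpa [d, hk] using hu0) (by simp [d])
    have h₂ : s (d + Pi.single i v) = 0 := by
      refine hzero _ (fun k => W.add_mem (hdW k) (hsingle i hv k)) (fun k hk => ?_)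
        (by simp [d, hi.symm])
      by_cases hki : k = i
      · subst hki
        simpa [d, hk] using fun h => huv (eq_neg_of_add_eq_zero_left h)
      · simpa [d, hk, hki] using hu0
    simpa [h₁] using h₂
  have hproj (p : Fin 6 → G) (hp : ∀ i, p i ∈ W) : s p = s (Pi.single j (p j)) := by
    rw [hsum]
    exact Finset.sum_eq_single j (fun i _ hi => hother i hi _ (hp i)) (by simp)
  obtain ⟨v, hv, hv0, -⟩ := havoid 0 0
  have key (x y z : G) (hx : x ∈ W) (hy : y ∈ W) (hz : z ∈ W) :
      e₁ (s (Pi.single j (![x, y, x, z, y, z] j))) = e₂ (s (Pi.single j (![y, x, z, x, z, y] j))) := by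
    rw [← hproj _ fun i => by fin_cases i <;> simpa, ← hproj _ fun i => by fin_cases i <;> simpa]
    exact he x y z
  have h₁ (h : e₁ (s (Pi.single j v)) = e₂ (s (Pi.single j 0))) : False := by
    rw [Pi.single_zero, map_zero, map_zero, ← map_zero e₁] at h
    exact hv0 (hj v hv (he₁ h))
  have h0 := W.zero_mem
  fin_cases j
  · exact h₁ (key v 0 0 hv h0 h0)
  · exact h₁ (key 0 v 0 h0 hv h0)
  · exact h₁ (key v 0 0 hv h0 h0)
  · exact h₁ (key 0 0 v h0 h0 hv)
  · exact h₁ (key 0 v 0 h0 hv h0)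
  · exact h₁ (key 0 0 v h0 h0 hv)

theorem injective_of_prime_torsion {A B : Type*} [AddCommGroup A] [AddCommGroup B] {n : ℕ}
    (hn : n ≠ 0) (hA : ∀ a : A, n • a = 0) (f : A →+ B)
    (h : ∀ p : ℕ, p.Prime → p ∣ n → ∀ x, p • x = 0 → f x = 0 → x = 0) :
    Function.Injective f := by
  rw [injective_iff_map_eq_zero]
  intro x hx
  by_contra hx0
  have hdvd : addOrderOf x ∣ n := addOrderOf_dvd_of_nsmul_eq_zero (hA x)
  have ho : addOrderOf x ≠ 0 := fun h0 => hn (by simpa [h0] using hdvd)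
  have ho1 : addOrderOf x ≠ 1 := by simpa [AddMonoid.addOrderOf_eq_one_iff] using hx0
  have hp := Nat.minFac_prime ho1
  have hpd := Nat.minFac_dvd (addOrderOf x)
  have h₀ := h _ hp (hpd.trans hdvd) ((addOrderOf x / (addOrderOf x).minFac) • x)
    (by rw [smul_smul, Nat.mul_div_cancel' hpd, addOrderOf_nsmul_eq_zero])
    (by rw [map_nsmul, hx, smul_zero])
  have h₁ := Nat.le_of_dvd (Nat.div_pos (Nat.le_of_dvd (Nat.pos_of_ne_zero ho) hpd) hp.pos)
    (addOrderOf_dvd_of_nsmul_eq_zero h₀)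
  have h₂ := Nat.div_lt_self (Nat.pos_of_ne_zero ho) hp.one_lt
  omega

theorem exists_addEquiv_finsupp_zmod {V : Type} [AddCommGroup V] {p : ℕ} (hp : p.Prime)
    (hV : ∀ v : V, p • v = 0) : ∃ ι : Type, Nonempty (V ≃+ (ι →₀ ZMod p)) := by
  have := Fact.mk hp
  let := AddCommGroup.zmodModule hV
  let b := Module.Basis.ofVectorSpace (ZMod p) V
  exact ⟨_, ⟨b.repr.toAddEquiv⟩⟩

theorem exists_injective_finsupp_zmod {V : Type} [AddCommGroup V] [Countable V] {p : ℕ}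
    (hp : p.Prime) (hV : ∀ v : V, p • v = 0) :
    ∃ f : V →+ (ℕ →₀ ZMod p), Function.Injective f := by
  have := Fact.mk hp
  obtain ⟨ι, ⟨e⟩⟩ := exists_addEquiv_finsupp_zmod hp hV
  have : Countable ι := by
    refine Function.Injective.countable (f := fun i => e.symm (Finsupp.single i 1)) ?_
    exact e.symm.injective.comp (Finsupp.single_left_injective one_ne_zero)
  obtain ⟨j, hj⟩ := exists_injective_nat ι
  exact ⟨(Finsupp.mapDomain.addMonoidHom j).comp e.toAddMonoidHom,
    (Finsupp.mapDomain_injective hj).comp e.injective⟩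

theorem exists_injective_zmod_finsupp {V : Type} [AddCommGroup V] [Infinite V] {p : ℕ}
    (hp : p.Prime) (hV : ∀ v : V, p • v = 0) :
    ∃ f : (ℕ →₀ ZMod p) →+ V, Function.Injective f := by
  have := Fact.mk hp
  obtain ⟨ι, ⟨e⟩⟩ := exists_addEquiv_finsupp_zmod hp hV
  have : Infinite ι := by
    by_contra h
    rw [not_infinite_iff_finite] at h
    have : Finite (ι →₀ ZMod p) :=
      Finite.of_injective (fun f => (f : ι → ZMod p)) DFunLike.coe_injective
    exact not_finite_iff_infinite.2 ‹Infinite V› (Finite.of_equiv _ e.symm.toEquiv)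
  let j := Infinite.natEmbedding ι
  exact ⟨e.symm.toAddMonoidHom.comp (Finsupp.mapDomain.addMonoidHom j),
    e.symm.injective.comp (Finsupp.mapDomain_injective j.injective)⟩

theorem nonempty_pi_finsupp_addEquiv (ι : Type) [Finite ι] [Nonempty ι] (A : Type)
    [AddCommGroup A] : Nonempty ((ι → ℕ →₀ A) ≃+ (ℕ →₀ A)) := by
  obtain ⟨e⟩ := nonempty_equiv_of_countable (α := ι × ℕ) (β := ℕ)
  exact ⟨(Finsupp.linearEquivFunOnFinite ℤ (ℕ →₀ A) ι).symm.toAddEquiv.trans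
    ((Finsupp.curryLinearEquiv ℤ).symm.toAddEquiv.trans (Finsupp.domCongr e))⟩

/-- Embed each `p`-torsion subgroup, extend by injectivity, and combine over the primes
dividing `n`. -/
theorem exists_injective_finsupp {G : Type} [AddCommGroup G] [Countable G] {n : ℕ} [NeZero n]
    (hG : ∀ x : G, n • x = 0) : ∃ f : G →+ (ℕ →₀ ZMod n), Function.Injective f := by
  have hn := NeZero.ne n
  have h (p : ℕ) : ∃ F : G →+ (ℕ →₀ ZMod n),
      p.Prime → p ∣ n → ∀ x, p • x = 0 → F x = 0 → x = 0 := by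
    by_cases hp : p.Prime ∧ p ∣ n
    swap
    · exact ⟨0, fun h₁ h₂ => (hp ⟨h₁, h₂⟩).elim⟩
    obtain ⟨hp, e, rfl⟩ := hp
    have := Fact.mk hp
    have he : e ≠ 0 := right_ne_zero_of_mul hn
    let V : AddSubgroup G := (nsmulAddMonoidHom p : G →+ G).ker
    obtain ⟨f, hf⟩ := exists_injective_finsupp_zmod (V := V) hp (fun v => Subtype.ext v.2)
    let m : ZMod p →+ ZMod (p * e) :=
      ZMod.lift p ⟨zmultiplesHom _ (e : ZMod (p * e)), by
        simp only [zmultiplesHom_apply, natCast_zsmul, nsmul_eq_mul]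
        rw [← Nat.cast_mul, ZMod.natCast_self]⟩
    have hm : Function.Injective m := by
      rw [injective_iff_map_eq_zero]
      intro a ha
      obtain ⟨z, rfl⟩ := ZMod.intCast_surjective a
      simp only [m, ZMod.lift_coe, zmultiplesHom_apply, zsmul_eq_mul] at ha
      have ha' : ((z * e : ℤ) : ZMod (p * e)) = 0 := by exact_mod_cast ha
      rw [ZMod.intCast_zmod_eq_zero_iff_dvd] at ha' ⊢
      push_cast at ha'
      exact Int.dvd_of_mul_dvd_mul_right (by exact_mod_cast he) ha'
    obtain ⟨F, hF⟩ := ((isDivisibleMod_zmod (p * e)).finsupp ℕ).exists_extension hG V.subtype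
      Subtype.val_injective ((Finsupp.mapRange.addMonoidHom m).comp f)
    refine ⟨F, fun _ _ x hx hFx => ?_⟩
    have h₁ := hF ⟨x, hx⟩
    have h₂ : Function.Injective (Finsupp.mapRange.addMonoidHom (ι := ℕ) m) :=
      Finsupp.mapRange_injective m (map_zero m) hm
    have h₃ : (⟨x, hx⟩ : V) = 0 := by
      refine (injective_iff_map_eq_zero f).1 hf _ ((injective_iff_map_eq_zero _).1 h₂ _ ?_)
      rw [← AddMonoidHom.comp_apply, ← h₁]
      exact hFx
    exact congrArg Subtype.val h₃
  choose F hF using h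
  obtain ⟨e⟩ := nonempty_pi_finsupp_addEquiv (Fin (n + 1)) (ZMod n)
  let Φ : G →+ (Fin (n + 1) → ℕ →₀ ZMod n) := AddMonoidHom.mk'
    (fun x i => F i x) (fun x y => by ext1 i; simp)
  refine ⟨e.toAddMonoidHom.comp Φ, e.injective.comp
    (injective_of_prime_torsion hn hG Φ fun p hp hpn x hx hΦ => ?_)⟩
  have hlt : p < n + 1 := Nat.lt_succ_of_le (Nat.le_of_dvd (Nat.pos_of_ne_zero hn) hpn)
  exact hF p hp hpn x hx (congrFun hΦ ⟨p, hlt⟩)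

/-- The subgroup of multiples by `m` of elements killed by `n`. -/
def nsmulTorsion (G : Type*) [AddCommGroup G] (n m : ℕ) : AddSubgroup G :=
  (nsmulAddMonoidHom n : G →+ G).ker.map (nsmulAddMonoidHom m)

theorem mem_nsmulTorsion {G : Type*} [AddCommGroup G] {n m : ℕ} {y : G} :
    y ∈ nsmulTorsion G n m ↔ ∃ x : G, n • x = 0 ∧ m • x = y := Iff.rfl

theorem exists_injective_of_infinite_nsmulTorsion {G : Type} [AddCommGroup G] {n : ℕ} [NeZero n]
    (h : ∀ p : ℕ, p.Prime → p ∣ n → Infinite (nsmulTorsion G n (n / p))) :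
    ∃ g : (ℕ →₀ ZMod n) →+ G, Function.Injective g := by
  have hn := NeZero.ne n
  have hdiv := (isDivisibleMod_zmod n).finsupp ℕ
  have h (p : ℕ) (hp : p ∈ n.primeFactors) : ∃ g : (ℕ →₀ ZMod n) →+ G,
      ∀ x, p • x = 0 → g x = 0 → x = 0 := by
    obtain ⟨hp, hpn, -⟩ := Nat.mem_primeFactors.1 hp
    have := h p hp hpn
    obtain ⟨f, hf⟩ := exists_injective_zmod_finsupp (V := nsmulTorsion G n (n / p)) hp (by
      rintro ⟨v, hv⟩
      obtain ⟨x, hx, rfl⟩ := mem_nsmulTorsion.1 hv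
      ext
      change p • (n / p) • x = 0
      rw [smul_smul, Nat.mul_div_cancel' hpn, hx])
    choose x hx hxf using fun i => mem_nsmulTorsion.1 (f (Finsupp.single i 1)).2
    let g : (ℕ →₀ ZMod n) →+ G := Finsupp.liftAddHom fun i =>
      ZMod.lift n ⟨zmultiplesHom G (x i), by simp [hx]⟩
    have hg (a : ℕ →₀ ZMod n) :
        (n / p) • g a = f (Finsupp.mapRange.addMonoidHom
          (ZMod.castHom hpn (ZMod p)).toAddMonoidHom a) := by
      induction a using Finsupp.induction_linear with
      | zero => simp
      | add a b ha hb => rw [map_add, smul_add, ha, hb, map_add, map_add]; rfl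
      | single i c =>
        obtain ⟨z, rfl⟩ := ZMod.intCast_surjective c
        have h₁ : g (Finsupp.single i (z : ZMod n)) = z • x i := by simp [g]
        have h₂ : Finsupp.mapRange.addMonoidHom (ZMod.castHom hpn (ZMod p)).toAddMonoidHom
            (Finsupp.single i (z : ZMod n)) = z • Finsupp.single i (1 : ZMod p) := by
          simp
        rw [h₁, h₂, map_zsmul, smul_comm, hxf]
        rfl
    refine ⟨g, fun a ha hga => ?_⟩
    obtain ⟨b, rfl⟩ := hdiv.exists_nsmul_eq (n / p) p (Nat.div_mul_cancel hpn) a ha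
    have h₁ := hg b
    rw [← map_nsmul, hga] at h₁
    have h₂ := (injective_iff_map_eq_zero f).1 hf _ (Subtype.ext h₁.symm)
    ext i
    have h₃ : ZMod.castHom hpn (ZMod p) (b i) = 0 := DFunLike.congr_fun h₂ i
    rw [← ZMod.natCast_zmod_val (b i), map_natCast, ZMod.natCast_eq_zero_iff] at h₃
    obtain ⟨k, hk⟩ := h₃
    rw [Finsupp.smul_apply, ← ZMod.natCast_zmod_val (b i), hk, nsmul_eq_mul, ← Nat.cast_mul,
      ← mul_assoc, Nat.div_mul_cancel hpn]
    simp
  choose g hg using h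
  let P := n.primeFactors.attach
  let Γ : (ℕ →₀ ZMod n) →+ G := ∑ p ∈ P, (ordCompl[p.1] n) • g p.1 p.2
  refine ⟨Γ, injective_of_prime_torsion hn hdiv.nsmul_eq_zero Γ fun p hp hpn x hx hΓ => ?_⟩
  have hpP : p ∈ n.primeFactors := Nat.mem_primeFactors.2 ⟨hp, hpn, hn⟩
  have h₁ : Γ x = (ordCompl[p] n) • g p hpP x := by
    simp only [Γ, AddMonoidHom.finsetSum_apply, AddMonoidHom.smul_apply]
    refine Finset.sum_eq_single (⟨p, hpP⟩ : n.primeFactors) (fun q _ hq => ?_)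
      (fun h => (h (Finset.mem_attach _ _)).elim)
    have hqp : p ≠ q.1 := fun h => hq (Subtype.ext h.symm)
    obtain ⟨k, hk⟩ : p ∣ ordCompl[q.1] n := by
      have h₂ : p ∣ ordProj[q.1] n * ordCompl[q.1] n := by rwa [Nat.ordProj_mul_ordCompl_eq_self]
      refine (hp.dvd_mul.1 h₂).resolve_left fun h₃ => hqp ?_
      exact (Nat.prime_dvd_prime_iff_eq hp (Nat.prime_of_mem_primeFactors q.2)).1
        (hp.dvd_of_dvd_pow h₃)
    rw [← map_nsmul, hk, mul_comm, mul_smul, hx, smul_zero, map_zero]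
  rw [h₁, ← map_nsmul] at hΓ
  have h₂ := hg p hpP _ (by rw [smul_comm, hx, smul_zero]) hΓ
  have hcop : Nat.Coprime p (ordCompl[p] n) := Nat.coprime_ordCompl hp hn
  have h₃ := addOrderOf_dvd_of_nsmul_eq_zero hx
  have h₄ := addOrderOf_dvd_of_nsmul_eq_zero h₂
  have h₅ := Nat.eq_one_of_dvd_coprimes hcop h₃ h₄
  rwa [AddMonoid.addOrderOf_eq_one_iff] at h₅

theorem nonempty_pi_prod_finsupp_addEquiv (A : Type) [AddCommGroup A] :
    Nonempty ((Fin 6 → (ℕ →₀ A) × (ℕ →₀ A)) ≃+ (ℕ →₀ A)) := by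
  obtain ⟨e⟩ := nonempty_pi_finsupp_addEquiv (Fin 2) A
  obtain ⟨e'⟩ := nonempty_pi_finsupp_addEquiv (Fin 6) A
  exact ⟨(AddEquiv.piCongrRight fun _ =>
    (LinearEquiv.finTwoArrow ℤ (ℕ →₀ A)).symm.toAddEquiv.trans e).trans e'⟩

theorem hasPseudoSiggers_of_biembeddable {G : Type} [AddCommGroup G] {n : ℕ} [NeZero n]
    (f : G →+ (ℕ →₀ ZMod n)) (hf : Function.Injective f)
    (g : (ℕ →₀ ZMod n) →+ G) (hg : Function.Injective g) : HasPseudoSiggers G := by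
  obtain ⟨t⟩ := nonempty_pi_prod_finsupp_addEquiv (ZMod n)
  have hM : HasPseudoSiggers ((ℕ →₀ ZMod n) × PUnit.{1}) :=
    hasPseudoSiggers_prod t 0 0 (fun _ => rfl) (fun a _ _ _ _ _ ha => (ha rfl).elim)
  have hdiv := (isDivisibleMod_zmod n).finsupp ℕ
  have hG (x : G) : n • x = 0 := hf (by rw [map_nsmul, hdiv.nsmul_eq_zero, map_zero])
  obtain ⟨r, hr⟩ := hdiv.exists_extension hG g hg (AddMonoidHom.id _)
  refine hM.of_retract (f.prod 0) (fun a b h => hf (congrArg Prod.fst h))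
    (g.comp (AddMonoidHom.fst _ _)) (r.prod 0) fun m => Prod.ext (hr _) rfl

theorem hasPseudoSiggers_finsupp_prod_zmod (n : ℕ) :
    HasPseudoSiggers ((ℕ →₀ ZMod n) × ZMod (2 * n)) := by
  obtain ⟨t⟩ := nonempty_pi_prod_finsupp_addEquiv (ZMod n)
  let π : ZMod (2 * n) →+ ZMod n := (ZMod.castHom (dvd_mul_left n 2) (ZMod n)).toAddMonoidHom
  have hπ (z : ℤ) : π z = z := map_intCast (ZMod.castHom (dvd_mul_left n 2) (ZMod n)) z
  let m : ZMod n →+ ZMod (2 * n) :=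
    ZMod.lift n ⟨zmultiplesHom _ (2 : ZMod (2 * n)), by
      simp only [zmultiplesHom_apply, natCast_zsmul, nsmul_eq_mul]
      have := ZMod.natCast_self (2 * n)
      push_cast at this
      linear_combination this⟩
  have hm (z : ℤ) : m z = z * 2 := by simp [m]
  refine hasPseudoSiggers_prod t ((Finsupp.singleAddHom 0).comp π)
    (m.comp (Finsupp.applyAddHom 0)) (fun c => ?_) ?_
  · obtain ⟨z, rfl⟩ := ZMod.intCast_surjective c
    simp [hπ, hm, mul_two]
  · have h (a : ZMod (2 * n)) (ha : ((Finsupp.singleAddHom (0 : ℕ)).comp π) a = 0) (ha0 : a ≠ 0) :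
        a = n := by
      obtain ⟨z, rfl⟩ := ZMod.intCast_surjective a
      have h₁ : (z : ZMod n) = 0 := by
        rw [← hπ]
        exact Finsupp.single_eq_zero.1 ha
      rw [ZMod.intCast_zmod_eq_zero_iff_dvd] at h₁
      obtain ⟨k, rfl⟩ := h₁
      have h₂ : (2 * n : ZMod (2 * n)) = 0 := by exact_mod_cast ZMod.natCast_self (2 * n)
      obtain ⟨l, rfl⟩ | ⟨l, rfl⟩ := Int.even_or_odd k
      · exact (ha0 (by push_cast; linear_combination (l : ZMod (2 * n)) * h₂)).elim
      · push_cast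
        linear_combination (l : ZMod (2 * n)) * h₂
    intro a b c ha hb hc ha0 hb0 hc0
    have h₂ : (2 * n : ZMod (2 * n)) = 0 := by exact_mod_cast ZMod.natCast_self (2 * n)
    rw [h a ha ha0, h b hb hb0, h c hc hc0]
    intro h₃
    refine ha0 ?_
    rw [h a ha ha0]
    linear_combination h₃ - h₂

theorem nsmul_zmod_two_mul (n : ℕ) (c : ZMod (2 * n)) : n • c = 0 ∨ n • c = n := by
  obtain ⟨z, rfl⟩ := ZMod.intCast_surjective c
  have h₂ : (2 * n : ZMod (2 * n)) = 0 := by exact_mod_cast ZMod.natCast_self (2 * n)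
  obtain ⟨l, rfl⟩ | ⟨l, rfl⟩ := Int.even_or_odd z
  · left
    rw [nsmul_eq_mul]
    push_cast
    linear_combination (l : ZMod (2 * n)) * h₂
  · right
    rw [nsmul_eq_mul]
    push_cast
    linear_combination (l : ZMod (2 * n)) * h₂

theorem hasPseudoSiggers_of_biembeddable_prod {G : Type} [AddCommGroup G] {n : ℕ} [NeZero n]
    (f : G →+ (ℕ →₀ ZMod n) × ZMod (2 * n)) (hf : Function.Injective f)
    (g : (ℕ →₀ ZMod n) × ZMod (2 * n) →+ G) (hg : Function.Injective g) :
    HasPseudoSiggers G := by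
  have hn := NeZero.ne n
  have : NeZero (2 * n) := ⟨by omega⟩
  have hdiv := (isDivisibleMod_zmod n).finsupp ℕ
  have hM (m : (ℕ →₀ ZMod n) × ZMod (2 * n)) : n • m = 0 ∨ n • m = (0, (n : ZMod (2 * n))) := by
    rcases nsmul_zmod_two_mul n m.2 with h | h
    · exact Or.inl (Prod.ext (hdiv.nsmul_eq_zero _) h)
    · exact Or.inr (Prod.ext (hdiv.nsmul_eq_zero _) h)
  have hn0 : (n : ZMod (2 * n)) ≠ 0 := by
    rw [Ne, ZMod.natCast_eq_zero_iff]
    intro h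
    have := Nat.le_of_dvd (Nat.pos_of_ne_zero hn) h
    omega
  have hG (x : G) : (2 * n) • x = 0 := hf (by
    rw [map_nsmul, map_zero]
    refine Prod.ext ?_ ((isDivisibleMod_zmod (2 * n)).nsmul_eq_zero _)
    rw [mul_smul, Prod.smul_fst, Prod.smul_fst, hdiv.nsmul_eq_zero, smul_zero]
    rfl)
  have hw : f (g (0, (n : ZMod (2 * n)))) = (0, (n : ZMod (2 * n))) := by
    have h₁ : ((0, (n : ZMod (2 * n))) : (ℕ →₀ ZMod n) × ZMod (2 * n)) = n • (0, 1) := by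
      simp
    have h₂ := hM (f (g (0, 1)))
    rw [← map_nsmul, ← map_nsmul, ← h₁] at h₂
    refine h₂.resolve_left fun h₃ => hn0 ?_
    have h₄ := (injective_iff_map_eq_zero g).1 hg _ ((injective_iff_map_eq_zero f).1 hf _ h₃)
    exact congrArg Prod.snd h₄
  have hgh (h : ℕ →₀ ZMod n) (y : G) (hy : n • y = g (h, 0)) : h = 0 := by
    have h₁ := hM (f y)
    rw [← map_nsmul, ← hw] at h₁
    rcases h₁ with h₁ | h₁
    · have h₂ := (injective_iff_map_eq_zero f).1 hf _ h₁
      rw [hy] at h₂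
      exact congrArg Prod.fst ((injective_iff_map_eq_zero g).1 hg _ h₂)
    · have h₂ := hf h₁
      rw [hy] at h₂
      exact congrArg Prod.fst (hg h₂)
  let N : AddSubgroup G := (nsmulAddMonoidHom n : G →+ G).range
  let i : (ℕ →₀ ZMod n) →+ G ⧸ N :=
    (QuotientAddGroup.mk' N).comp (g.comp (AddMonoidHom.inl _ _))
  have hi : Function.Injective i := by
    rw [injective_iff_map_eq_zero]
    intro h hh
    obtain ⟨y, hy⟩ := (QuotientAddGroup.eq_zero_iff _).1 hh
    exact hgh h y hy
  have hQ (q : G ⧸ N) : n • q = 0 := by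
    obtain ⟨x, rfl⟩ := QuotientAddGroup.mk_surjective q
    exact (QuotientAddGroup.eq_zero_iff _).2 ⟨x, rfl⟩
  obtain ⟨rK, hrK⟩ := hdiv.exists_extension hQ i hi (AddMonoidHom.id _)
  obtain ⟨rC, hrC⟩ := (isDivisibleMod_zmod (2 * n)).exists_extension hG g hg (AddMonoidHom.snd _ _)
  let rK' : G →+ (ℕ →₀ ZMod n) := rK.comp (QuotientAddGroup.mk' N)
  let r : G →+ (ℕ →₀ ZMod n) :=
    rK' - rK'.comp (g.comp ((AddMonoidHom.inr _ _).comp rC))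
  refine (hasPseudoSiggers_finsupp_prod_zmod n).of_retract f hf g (r.prod rC) fun m => ?_
  refine Prod.ext ?_ (hrC m)
  change rK' (g m) - rK' (g (0, rC (g m))) = m.1
  rw [hrC, ← map_sub, ← map_sub]
  refine Eq.trans ?_ (hrK m.1)
  have h₁ : m - (0, AddMonoidHom.snd _ _ m) = (m.1, 0) :=
    Prod.ext (sub_zero _) (sub_self _)
  rw [h₁]
  rfl

theorem exists_zmod_embedding {G : Type*} [AddCommGroup G] {m : ℕ} {a : G}
    (ha : addOrderOf a = m) : ∃ i : ZMod m →+ G, Function.Injective i ∧ i 1 = a := by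
  subst ha
  have h0 : zmultiplesHom G a (addOrderOf a) = 0 := by simp [addOrderOf_nsmul_eq_zero]
  refine ⟨ZMod.lift _ ⟨zmultiplesHom G a, h0⟩, ?_, ?_⟩
  · rw [injective_iff_map_eq_zero]
    intro c hc
    obtain ⟨z, rfl⟩ := ZMod.intCast_surjective c
    rw [ZMod.lift_coe] at hc
    rw [ZMod.intCast_zmod_eq_zero_iff_dvd]
    exact addOrderOf_dvd_iff_zsmul_eq_zero.2 hc
  · simpa using ZMod.lift_coe (addOrderOf a) ⟨zmultiplesHom G a, h0⟩ 1

theorem exists_injective_finsupp_prod_zmod {G : Type} [AddCommGroup G] [Countable G] {n : ℕ}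
    [NeZero n] (hG : ∀ x : G, (2 * n) • x = 0) {a : G} (ha : addOrderOf a = 2 * n)
    (hna : ∀ x : G, n • x = 0 ∨ n • x = n • a) :
    ∃ f : G →+ (ℕ →₀ ZMod n) × ZMod (2 * n), Function.Injective f := by
  have hn := NeZero.ne n
  have : NeZero (2 * n) := ⟨by omega⟩
  obtain ⟨i, hi, hi1⟩ := exists_zmod_embedding ha
  obtain ⟨c, hc⟩ := (isDivisibleMod_zmod (2 * n)).exists_extension hG i hi (AddMonoidHom.id _)
  let N : AddSubgroup G := (nsmulAddMonoidHom n : G →+ G).range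
  have hQ (q : G ⧸ N) : n • q = 0 := by
    obtain ⟨x, rfl⟩ := QuotientAddGroup.mk_surjective q
    exact (QuotientAddGroup.eq_zero_iff _).2 ⟨x, rfl⟩
  have : Countable (G ⧸ N) := (QuotientAddGroup.mk_surjective (s := N)).countable
  obtain ⟨f, hf⟩ := exists_injective_finsupp hQ
  refine ⟨(f.comp (QuotientAddGroup.mk' N)).prod c, ?_⟩
  rw [injective_iff_map_eq_zero]
  intro x hx
  have h₁ : f (QuotientAddGroup.mk' N x) = 0 := congrArg Prod.fst hx
  have h₂ : c x = 0 := congrArg Prod.snd hx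
  obtain ⟨y, hy⟩ := (QuotientAddGroup.eq_zero_iff _).1 ((injective_iff_map_eq_zero f).1 hf _ h₁)
  change n • y = x at hy
  rcases hna y with h | h
  · rw [← hy, h]
  · have h₃ : c (n • a) = n := by rw [← hi1, map_nsmul, hc]; simp
    rw [← h, hy, h₂, eq_comm, ZMod.natCast_eq_zero_iff] at h₃
    have := Nat.le_of_dvd (Nat.pos_of_ne_zero hn) h₃
    omega

theorem exists_prod_zmod_injective {G : Type} [AddCommGroup G] {n m : ℕ} [NeZero m]
    (g : (ℕ →₀ ZMod n) →+ G) (hg : Function.Injective g)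
    (i : ZMod m →+ G) (hi : Function.Injective i) :
    ∃ g' : (ℕ →₀ ZMod n) × ZMod m →+ G, Function.Injective g' := by
  have hT : (g ⁻¹' Set.range i).Finite := (Set.finite_range i).preimage hg.injOn
  obtain ⟨N, hN⟩ : ∃ N, ∀ h, g h ∈ Set.range i → ∀ k, N ≤ k → h k = 0 := by
    obtain ⟨N, hN⟩ := (hT.toFinset.sup Finsupp.support).exists_nat_subset_range
    refine ⟨N, fun h hh k hk => ?_⟩
    by_contra hk0
    have h₁ : k ∈ hT.toFinset.sup Finsupp.support := by
      rw [Finset.mem_sup]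
      exact ⟨h, by simpa using hh, by simpa using hk0⟩
    have := Finset.mem_range.1 (hN h₁)
    omega
  let S : (ℕ →₀ ZMod n) →+ (ℕ →₀ ZMod n) := Finsupp.mapDomain.addMonoidHom (· + N)
  have hS (h k) : S h (k + N) = h k :=
    Finsupp.mapDomain_apply (add_left_injective N) h k
  refine ⟨(g.comp S).coprod i, ?_⟩
  rw [injective_iff_map_eq_zero]
  rintro ⟨h, c⟩ hhc
  have h₁ : g (S h) + i c = 0 := hhc
  have h₂ : h = 0 := by
    ext k
    rw [← hS h k]
    exact hN (S h) ⟨-c, by rw [map_neg]; exact (eq_neg_of_add_eq_zero_left h₁).symm⟩ _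
      (Nat.le_add_left _ _)
  subst h₂
  have h₃ : c = 0 := (injective_iff_map_eq_zero i).1 hi c (by simpa using h₁)
  rw [h₃]
  rfl

theorem HasPseudoSiggers.card_range_nsmul_le_two {G : Type*} [AddCommGroup G]
    (h : HasPseudoSiggers G) (k : ℕ) (hfin : Finite (nsmulAddMonoidHom k : G →+ G).range) :
    Nat.card (nsmulAddMonoidHom k : G →+ G).range ≤ 2 := by
  obtain ⟨s, e₁, e₂, hs, he₁, -, he⟩ := h
  refine card_le_two_of_pseudoSiggers s e₁ e₂ hs he₁ he _ fun p hp => ?_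
  choose q hq using hp
  refine ⟨s q, ?_⟩
  change k • s q = s p
  rw [← map_nsmul]
  congr 1
  funext i
  exact hq i

theorem addOrderOf_le_card_range_nsmul {G : Type*} [AddCommGroup G] (k : ℕ) (a : G)
    [Finite (nsmulAddMonoidHom k : G →+ G).range] :
    addOrderOf (k • a) ≤ Nat.card (nsmulAddMonoidHom k : G →+ G).range := by
  have h := addOrderOf_le_card (x := (⟨k • a, a, rfl⟩ : (nsmulAddMonoidHom k : G →+ G).range))
  rwa [← AddSubgroup.addOrderOf_coe] at h

theorem infinite_nsmulTorsion_of_finite_range {G : Type*} [AddCommGroup G] {n p : ℕ} (hpn : p ∣ n)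
    (hfin : Finite (nsmulAddMonoidHom n : G →+ G).range)
    (hinf : Infinite (nsmulAddMonoidHom (n / p) : G →+ G).range) :
    Infinite (nsmulTorsion G n (n / p)) := by
  let W := (nsmulAddMonoidHom (n / p) : G →+ G).range
  let φ : W →+ G := (nsmulAddMonoidHom p).comp W.subtype
  have hφ : (Set.range φ).Finite := by
    refine Set.Finite.subset (Set.toFinite ((nsmulAddMonoidHom n : G →+ G).range : Set G)) ?_
    rintro _ ⟨⟨_, x, rfl⟩, rfl⟩
    refine ⟨x, ?_⟩
    change n • x = p • (n / p) • x
    rw [smul_smul, Nat.mul_div_cancel' hpn]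
  by_contra hcon
  rw [not_infinite_iff_finite] at hcon
  have hker : Finite φ.ker := by
    have hmem (w : φ.ker) : ((w : W) : G) ∈ nsmulTorsion G n (n / p) := by
      obtain ⟨⟨_, x, rfl⟩, hx⟩ := w
      refine mem_nsmulTorsion.2 ⟨x, ?_, rfl⟩
      have hx' : p • (n / p) • x = 0 := hx
      rwa [smul_smul, Nat.mul_div_cancel' hpn] at hx'
    exact Finite.of_injective (fun w => (⟨_, hmem w⟩ : nsmulTorsion G n (n / p)))
      fun a b hab => Subtype.ext (Subtype.ext (Subtype.mk.inj hab))
  have hrange : Finite φ.range := hφ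
  have : Finite (W ⧸ φ.ker) :=
    Finite.of_equiv _ (QuotientAddGroup.quotientKerEquivRange φ).symm.toEquiv
  have : Finite W := 
    Finite.of_equiv _ (AddSubgroup.addGroupEquivQuotientProdAddSubgroup (s := φ.ker)).symm
  exact not_finite_iff_infinite.2 hinf this

/-- If `G` has exponent `E`, then `n = E` or `n = E / 2`, according to whether every group
`(E / p) • G`, for `p` a prime divisor of `E`, is infinite. -/
theorem HasPseudoSiggers.biembeddable {G : Type} [AddCommGroup G] [Countable G]
    (hexp : ∃ k : ℕ, 1 ≤ k ∧ ∀ x : G, k • x = 0) (h : HasPseudoSiggers G) :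
    ∃ n : ℕ, 1 ≤ n ∧
      ((∃ (f : G →+ (ℕ →₀ ZMod n)) (g : (ℕ →₀ ZMod n) →+ G),
          Function.Injective f ∧ Function.Injective g) ∨
       (∃ (f : G →+ (ℕ →₀ ZMod n) × ZMod (2 * n)) (g : (ℕ →₀ ZMod n) × ZMod (2 * n) →+ G),
          Function.Injective f ∧ Function.Injective g)) := by
  obtain ⟨k, hk, hkG⟩ := hexp
  have hEx : AddMonoid.ExponentExists G := ⟨k, hk, hkG⟩
  obtain ⟨a, ha⟩ := AddMonoid.exists_addOrderOf_eq_exponent hEx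
  have hE : AddMonoid.exponent G ≠ 0 := AddMonoid.exponent_ne_zero.2 hEx
  have hEG (x : G) : AddMonoid.exponent G • x = 0 := AddMonoid.exponent_nsmul_eq_zero x
  generalize AddMonoid.exponent G = E at ha hE hEG
  by_cases hinf : ∀ p : ℕ, p.Prime → p ∣ E → Infinite (nsmulAddMonoidHom (E / p) : G →+ G).range
  · have := NeZero.mk hE
    obtain ⟨f, hf⟩ := exists_injective_finsupp hEG
    have hfin : Finite (nsmulAddMonoidHom E : G →+ G).range := by
      refine Set.Finite.subset (Set.finite_singleton 0) ?_
      rintro _ ⟨x, rfl⟩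
      exact hEG x
    obtain ⟨g, hg⟩ := exists_injective_of_infinite_nsmulTorsion fun p hp hpE =>
      infinite_nsmulTorsion_of_finite_range hpE hfin (hinf p hp hpE)
    exact ⟨E, Nat.pos_of_ne_zero hE, Or.inl ⟨f, g, hf, hg⟩⟩
  · push Not at hinf
    obtain ⟨p, hp, hpE, hfin⟩ := hinf
    have horder (q m : ℕ) (hqm : m * q = E) : addOrderOf (m • a) = q := by
      have hm : m ≠ 0 := by rintro rfl; simp at hqm; exact hE hqm.symm
      rw [addOrderOf_nsmul' _ hm, ha, ← hqm, Nat.gcd_eq_right (dvd_mul_right m q),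
        Nat.mul_div_cancel_left _ (Nat.pos_of_ne_zero hm)]
    have hcard := h.card_range_nsmul_le_two _ hfin
    have hp2 : p = 2 := by
      have h₁ := addOrderOf_le_card_range_nsmul (E / p) a
      rw [horder p _ (Nat.div_mul_cancel hpE)] at h₁
      have := hp.two_le
      omega
    subst hp2
    obtain ⟨n, rfl⟩ := hpE
    rw [Nat.mul_div_cancel_left _ two_pos] at hfin hcard
    have hn : n ≠ 0 := by rintro rfl; simp at hE
    have := NeZero.mk hn
    have hna (x : G) : n • x = 0 ∨ n • x = n • a := by
      by_contra! hx
      have hna0 : n • a ≠ 0 := by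
        intro h0
        have h₁ := horder 2 n (mul_comm n 2)
        rw [h0, addOrderOf_zero] at h₁
        omega
      have h₁ : ({0, n • x, n • a} : Set G).ncard = 3 :=
        Set.ncard_eq_three.2 ⟨_, _, _, hx.1.symm, hna0.symm, hx.2, rfl⟩
      have hsub : ({0, n • x, n • a} : Set G) ⊆
          (nsmulAddMonoidHom n : G →+ G).range := by
        rintro _ (rfl | rfl | rfl)
        exacts [zero_mem (nsmulAddMonoidHom n : G →+ G).range, ⟨x, rfl⟩, ⟨a, rfl⟩]
      have h₂ := Set.ncard_le_ncard hsub (Set.toFinite _)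
      change 2 ≥ Set.ncard ((nsmulAddMonoidHom n : G →+ G).range : Set G) at hcard
      omega
    obtain ⟨f, hf⟩ := exists_injective_finsupp_prod_zmod hEG ha hna
    obtain ⟨g₀, hg₀⟩ := exists_injective_of_infinite_nsmulTorsion (G := G) (n := n)
      fun q hq hqn => by
        refine infinite_nsmulTorsion_of_finite_range hqn hfin ?_
        by_contra hfin'
        rw [not_infinite_iff_finite] at hfin'
        have h₁ := h.card_range_nsmul_le_two _ hfin'
        have h₂ := addOrderOf_le_card_range_nsmul (n / q) a
        rw [horder (2 * q) _ (by rw [mul_left_comm, Nat.div_mul_cancel hqn])] at h₂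
        have := hq.two_le
        omega
    obtain ⟨i, hi, -⟩ := exists_zmod_embedding ha
    have : NeZero (2 * n) := ⟨hE⟩
    obtain ⟨g, hg⟩ := exists_prod_zmod_injective g₀ hg₀ i hi
    exact ⟨n, Nat.pos_of_ne_zero hn, Or.inr ⟨f, g, hf, hg⟩⟩

/-- For a countable abelian group `G` of finite exponent, `(G, ≠)` has a
pseudo-Siggers polymorphism iff `G` is bi-embeddable with `⨁_ℕ ZMod n` or with
`(⨁_ℕ ZMod n) × ZMod (2*n)` for some `n ≥ 1`. -/
theorem stmt_0 (G : Type) [AddCommGroup G] [Countable G]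
    (hexp : ∃ k : ℕ, 1 ≤ k ∧ ∀ x : G, k • x = 0) :
    (∃ (s : (Fin 6 → G) →+ G) (e₁ e₂ : G →+ G),
        (∀ p q : Fin 6 → G, (∀ i, p i ≠ q i) → s p ≠ s q) ∧
        Function.Injective e₁ ∧ Function.Injective e₂ ∧
        (∀ x y z : G, e₁ (s ![x, y, x, z, y, z]) = e₂ (s ![y, x, z, x, z, y])))
    ↔
    (∃ n : ℕ, 1 ≤ n ∧
      ((∃ (f : G →+ DirectSum ℕ (fun _ => ZMod n))
          (g : DirectSum ℕ (fun _ => ZMod n) →+ G),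
          Function.Injective f ∧ Function.Injective g) ∨
       (∃ (f : G →+ (DirectSum ℕ (fun _ => ZMod n)) × ZMod (2 * n))
          (g : (DirectSum ℕ (fun _ => ZMod n)) × ZMod (2 * n) →+ G),
          Function.Injective f ∧ Function.Injective g))) := by
  have h (n : ℕ) : Nonempty ((ℕ →₀ ZMod n) ≃+ DirectSum ℕ (fun _ => ZMod n)) :=
    ⟨(finsuppLEquivDirectSum ℤ (ZMod n) ℕ).toAddEquiv⟩
  constructor
  · intro hG
    obtain ⟨n, hn, hfg⟩ := HasPseudoSiggers.biembeddable hexp hG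
    obtain ⟨D⟩ := h n
    refine ⟨n, hn, hfg.imp ?_ ?_⟩
    · rintro ⟨f, g, hf, hg⟩
      exact ⟨D.toAddMonoidHom.comp f, g.comp D.symm.toAddMonoidHom, D.injective.comp hf,
        hg.comp D.symm.injective⟩
    · rintro ⟨f, g, hf, hg⟩
      let D' := D.prodCongr (AddEquiv.refl (ZMod (2 * n)))
      exact ⟨D'.toAddMonoidHom.comp f, g.comp D'.symm.toAddMonoidHom, D'.injective.comp hf,
        hg.comp D'.symm.injective⟩
  · rintro ⟨n, hn, ⟨f, g, hf, hg⟩ | ⟨f, g, hf, hg⟩⟩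
    · obtain ⟨D⟩ := h n
      have : NeZero n := ⟨by omega⟩
      exact hasPseudoSiggers_of_biembeddable (D.symm.toAddMonoidHom.comp f)
        (D.symm.injective.comp hf) (g.comp D.toAddMonoidHom) (hg.comp D.injective)
    · obtain ⟨D⟩ := h n
      have : NeZero n := ⟨by omega⟩
      let D' := D.prodCongr (AddEquiv.refl (ZMod (2 * n)))
      exact hasPseudoSiggers_of_biembeddable_prod (D'.symm.toAddMonoidHom.comp f)
        (D'.symm.injective.comp hf) (g.comp D'.toAddMonoidHom) (hg.comp D'.injective)
end

section
/- Let G be a countable abelian group of finite exponent with G nontrivial, in which every element has order a power of 2. Then the following are equivalent: (A) there exists x ∈ G with x ≠ 0 and x + x = 0 such that G is bi-embeddable with G × (G ⧸ AddSubgroup.zmultiples x); (B) there is an injective additive group homomorphism G × G →+ G, or there exists n ∈ ℕ such that G is bi-embeddable with (⨁_ℕ ZMod (2^n)) × ZMod (2^(n+1)). -/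
open Function

theorem ZMod.exists_intCast_mul_eq {N : ℕ} (hN : N ≠ 0) {d e : ℤ} (hde : d * e = N)
    (c : ZMod N) (hc : (e : ZMod N) * c = 0) : ∃ c' : ZMod N, (d : ZMod N) * c' = c := by
  obtain ⟨c, rfl⟩ := ZMod.intCast_surjective c
  rw [← Int.cast_mul, ZMod.intCast_zmod_eq_zero_iff_dvd, ← hde, mul_comm e c] at hc
  have he : e ≠ 0 := by
    rintro rfl
    simp at hde
    exact hN (by exact_mod_cast hde.symm)
  obtain ⟨c', rfl⟩ := Int.dvd_of_mul_dvd_mul_right he hc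
  exact ⟨c', by push_cast; rfl⟩

theorem Finsupp.exists_intCast_smul_eq {ι : Type*} {N : ℕ} (hN : N ≠ 0) {d e : ℤ}
    (hde : d * e = N) (m : ι →₀ ZMod N) (hm : (e : ZMod N) • m = 0) :
    ∃ m' : ι →₀ ZMod N, (d : ZMod N) • m' = m := by
  classical
  have h (i : ι) : ∃ c' : ZMod N, (d : ZMod N) * c' = m i :=
    ZMod.exists_intCast_mul_eq hN hde (m i) (by simpa using DFunLike.congr_fun hm i)
  choose c hc using h
  refine ⟨Finsupp.onFinset m.support (fun i => if m i = 0 then 0 else c i) (by simp; tauto), ?_⟩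
  ext1 i
  by_cases hi : m i = 0 <;> simp [hi, hc]

theorem Module.Baer.finsupp_zmod (ι : Type*) {N : ℕ} (hN : N ≠ 0) :
    Module.Baer (ZMod N) (ι →₀ ZMod N) := by
  intro I g
  obtain ⟨d, hd⟩ := IsPrincipalIdealRing.principal (I.comap (Int.castRingHom (ZMod N)))
  have hmem (a : ℤ) : (a : ZMod N) ∈ I ↔ d ∣ a := by
    have : a ∈ I.comap (Int.castRingHom (ZMod N)) ↔ d ∣ a := by
      rw [hd]; exact Ideal.mem_span_singleton
    simpa using this
  obtain ⟨e, he⟩ : d ∣ (N : ℤ) := (hmem N).1 (by simp)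
  have hdI : (d : ZMod N) ∈ I := (hmem d).2 dvd_rfl
  obtain ⟨m, hm⟩ := Finsupp.exists_intCast_smul_eq hN he.symm (g ⟨d, hdI⟩) <| by
    rw [← map_smul]
    have : (e : ZMod N) • (⟨(d : ZMod N), hdI⟩ : I) = 0 := by
      ext
      simp only [SetLike.mk_smul_mk, smul_eq_mul, ZeroMemClass.coe_zero]
      rw [mul_comm, ← Int.cast_mul, ← he]; simp
    rw [this, map_zero]
  refine ⟨LinearMap.toSpanSingleton _ _ m, fun a ha => ?_⟩
  obtain ⟨a, rfl⟩ := ZMod.intCast_surjective a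
  obtain ⟨b, rfl⟩ := (hmem a).1 ha
  have : (⟨((d * b : ℤ) : ZMod N), ha⟩ : I) = (b : ZMod N) • ⟨(d : ZMod N), hdI⟩ := by
    ext; simp [mul_comm]
  rw [this, map_smul, ← hm]
  simp [mul_smul, smul_comm (d : ZMod N)]

/-- A sum of copies of `ZMod N` is injective among the abelian groups of exponent `N`. -/
theorem AddSubgroup.exists_extension_finsupp_zmod {ι K : Type*} [AddCommGroup K] {N : ℕ}
    (hN : N ≠ 0) (hK : ∀ y : K, N • y = 0) (V : AddSubgroup K) (g : V →+ (ι →₀ ZMod N)) :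
    ∃ h : K →+ (ι →₀ ZMod N), ∀ v : V, h v = g v := by
  have : Module (ZMod N) K := AddCommGroup.zmodModule hK
  let W : Submodule (ZMod N) K := AddSubgroup.toZModSubmodule N V
  let gW : W →ₗ[ZMod N] (ι →₀ ZMod N) := AddMonoidHom.toZModLinearMap N (M := W) g
  obtain ⟨h, hh⟩ := (Module.Baer.finsupp_zmod ι hN).extension_property
    W.subtype W.injective_subtype gW
  exact ⟨h.toAddMonoidHom, fun v => DFunLike.congr_fun hh v⟩

/-- A nonzero element killed by a power of two has a multiple of order exactly two. -/
theorem exists_two_pow_nsmul_ne_zero {A : Type*} [AddCommGroup A] {m : ℕ} {y : A}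
    (hy : y ≠ 0) (hm : 2 ^ m • y = 0) : ∃ k : ℕ, 2 ^ k • y ≠ 0 ∧ 2 • 2 ^ k • y = 0 := by
  classical
  have hex : ∃ m : ℕ, 2 ^ m • y = 0 := ⟨m, hm⟩
  obtain ⟨k, hk⟩ : ∃ k, Nat.find hex = k + 1 :=
    Nat.exists_eq_succ_of_ne_zero fun h => hy (by simpa [h] using Nat.find_spec hex)
  refine ⟨k, Nat.find_min hex (by omega), ?_⟩
  have := Nat.find_spec hex
  rwa [hk, pow_succ', mul_smul] at this

theorem AddMonoidHom.injective_of_two_nsmul {A B : Type*} [AddCommGroup A] [AddCommGroup B]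
    {m : ℕ} (hA : ∀ y : A, 2 ^ m • y = 0) (f : A →+ B)
    (hf : ∀ y, 2 • y = 0 → f y = 0 → y = 0) : Injective f := by
  refine (injective_iff_map_eq_zero f).2 fun y hy => by_contra fun hne => ?_
  obtain ⟨k, hk, hk2⟩ := exists_two_pow_nsmul_ne_zero hne (hA y)
  exact hk (hf _ hk2 (by rw [map_nsmul, hy, smul_zero]))

/-- A countable abelian group of exponent two embeds in a countable sum of copies of `ZMod 2`. -/
theorem exists_injective_finsupp_zmod_two {V : Type*} [AddCommGroup V] [Countable V]
    (hV : ∀ y : V, 2 • y = 0) : ∃ f : V →+ (ℕ →₀ ZMod 2), Injective f := by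
  have : Module (ZMod 2) V := AddCommGroup.zmodModule hV
  let b := Module.Basis.ofVectorSpace (ZMod 2) V
  obtain ⟨j, hj⟩ := exists_injective_nat (Module.Basis.ofVectorSpaceIndex (ZMod 2) V)
  exact ⟨(Finsupp.mapDomain.addMonoidHom j).comp b.repr.toAddMonoidHom,
    (Finsupp.mapDomain_injective hj).comp b.repr.injective⟩

theorem exists_injective_finsupp_zmod_s11 {K : Type*} [AddCommGroup K] [Countable K] {n : ℕ}
    (hK : ∀ y : K, 2 ^ n • y = 0) : ∃ f : K →+ (ℕ →₀ ZMod (2 ^ n)), Injective f := by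
  obtain _ | n := n
  · have : Subsingleton K := ⟨fun a b => by simpa using (hK a).trans (hK b).symm⟩
    exact ⟨0, injective_of_subsingleton _⟩
  let V : AddSubgroup K := (nsmulAddMonoidHom 2).ker
  obtain ⟨s, hs⟩ := exists_injective_finsupp_zmod_two (V := V)
    fun y => Subtype.ext y.2
  let c : ZMod 2 →+ ZMod (2 ^ (n + 1)) :=
    ZMod.lift 2 ⟨(AddMonoidHom.mulLeft (2 ^ n)).comp (Int.castAddHom _), by
      simpa [pow_succ] using ZMod.natCast_self (2 ^ (n + 1))⟩
  have hc : Injective c := by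
    refine (ZMod.lift_injective _).2 fun m hm => ?_
    have hm' : (((2 ^ n * m : ℤ)) : ZMod (2 ^ (n + 1))) = 0 := by simpa using hm
    rw [ZMod.intCast_zmod_eq_zero_iff_dvd, Nat.cast_pow, pow_succ, Nat.cast_two] at hm'
    exact (ZMod.intCast_zmod_eq_zero_iff_dvd _ _).2
      (Int.dvd_of_mul_dvd_mul_left (by positivity) hm')
  have hg : Injective ((Finsupp.mapRange.addMonoidHom c).comp s) :=
    (Finsupp.mapRange_injective c (map_zero c) hc).comp hs
  obtain ⟨h, hh⟩ := AddSubgroup.exists_extension_finsupp_zmod (by positivity) hK V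
    ((Finsupp.mapRange.addMonoidHom c).comp s)
  refine ⟨h, AddMonoidHom.injective_of_two_nsmul hK _ fun y hy hy0 => ?_⟩
  have hyV : y ∈ V := hy
  rw [hh ⟨y, hyV⟩, map_eq_zero_iff _ hg] at hy0
  exact congrArg Subtype.val hy0

/-- If `2 ^ n • K` is contained in a subgroup of order two, then `K` embeds in the sum of
`ZMod (2 ^ (n + 1))` and countably many copies of `ZMod (2 ^ n)`. -/
theorem exists_injective_finsupp_zmod_prod {K : Type*} [AddCommGroup K] [Countable K] {n : ℕ}
    {x : K} (hx : x ≠ 0) (hx2 : x + x = 0)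
    (hK : ∀ y : K, 2 ^ n • y ∈ AddSubgroup.zmultiples x) :
    ∃ f : K →+ (ℕ →₀ ZMod (2 ^ n)) × ZMod (2 ^ (n + 1)), Injective f := by
  have hx2' : 2 • x = 0 := by rwa [two_nsmul]
  have hz : ∀ y ∈ AddSubgroup.zmultiples x, y = 0 ∨ y = x := by
    rintro _ ⟨m, rfl⟩
    obtain ⟨k, rfl | rfl⟩ := Int.even_or_odd' m
    · left; simp [mul_comm, mul_smul, hx2', ofNat_zsmul]
    · right; simp [mul_comm, add_smul, mul_smul, hx2', ofNat_zsmul]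
  have : Countable (K ⧸ AddSubgroup.zmultiples x) := (QuotientAddGroup.mk_surjective).countable
  obtain ⟨f, hf⟩ := exists_injective_finsupp_zmod_s11 (K := K ⧸ AddSubgroup.zmultiples x) (n := n) <| by
    rintro ⟨y⟩
    exact (QuotientAddGroup.eq_zero_iff _).2 (hK y)
  obtain ⟨g, hg⟩ := exists_injective_finsupp_zmod_s11 (K := K) (n := n + 1) fun y => by
    rw [pow_succ', mul_smul]
    obtain h | h := hz _ (hK y) <;> simp [h, hx2']
  obtain ⟨i, hi⟩ : ∃ i, g x i ≠ 0 := by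
    by_contra! h
    exact hx ((map_eq_zero_iff g hg).1 (Finsupp.ext h))
  refine ⟨(f.comp (QuotientAddGroup.mk' _)).prod ((Finsupp.applyAddHom i).comp g),
    (injective_iff_map_eq_zero _).2 fun y hy => ?_⟩
  obtain ⟨h1, h2⟩ := Prod.ext_iff.1 hy
  have h1' := (QuotientAddGroup.eq_zero_iff _).1 ((map_eq_zero_iff f hf).1 h1)
  obtain h | rfl := hz y h1'
  · exact h
  · exact absurd h2 hi

theorem exists_injective_of_infinite {G : Type*} [AddCommGroup G] {n : ℕ}
    (hG : {y : G | 2 • y = 0 ∧ ∃ z, 2 ^ n • z = y}.Infinite) :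
    ∃ f : (ℕ →₀ ZMod (2 ^ (n + 1))) →+ G, Injective f := by
  let S : AddSubgroup G := (nsmulAddMonoidHom 2).ker ⊓ (nsmulAddMonoidHom (2 ^ n)).range
  have hS : Infinite S := hG.to_subtype
  have : Module (ZMod 2) S := AddCommGroup.zmodModule fun y => Subtype.ext y.2.1
  let b := Module.Basis.ofVectorSpace (ZMod 2) S
  have : Infinite (Module.Basis.ofVectorSpaceIndex (ZMod 2) S) := by
    by_contra hfin
    rw [not_infinite_iff_finite] at hfin
    have := Module.Finite.of_basis b
    have := Module.finite_of_finite (ZMod 2) (M := S)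
    exact not_finite S
  let j := Infinite.natEmbedding (Module.Basis.ofVectorSpaceIndex (ZMod 2) S)
  let Φ : (ℕ →₀ ZMod 2) →+ G := S.subtype.comp
    (b.repr.symm.toAddMonoidHom.comp (Finsupp.mapDomain.addMonoidHom j))
  have hΦ : Injective Φ := Subtype.val_injective.comp
    (b.repr.symm.injective.comp (Finsupp.mapDomain_injective j.injective))
  have hz (i : ℕ) : ∃ z : G, 2 ^ n • z = b (j i) := (b (j i)).2.2
  choose z hz using hz
  have hz2 (i : ℕ) : 2 ^ (n + 1) • z i = 0 := by
    rw [pow_succ', mul_smul, hz]; exact (b (j i)).2.1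
  let φ : (ℕ →₀ ZMod (2 ^ (n + 1))) →+ G := Finsupp.liftAddHom fun i =>
    ZMod.lift _ ⟨zmultiplesHom G (z i), by
      rw [zmultiplesHom_apply, natCast_zsmul, hz2]⟩
  let red : ZMod (2 ^ (n + 1)) →+ ZMod 2 := ZMod.castHom (dvd_pow_self 2 n.succ_ne_zero) (ZMod 2)
  have hcomp (c : ℕ →₀ ZMod (2 ^ (n + 1))) :
      2 ^ n • φ c = Φ (Finsupp.mapRange.addMonoidHom red c) := by
    induction c using Finsupp.induction_linear with
    | zero => simp
    | add f g hf hg => rw [map_add, smul_add, hf, hg, map_add, map_add]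
    | single i a =>
      obtain ⟨a, rfl⟩ := ZMod.intCast_surjective a
      have hr : red (a : ZMod (2 ^ (n + 1))) = a • 1 := by simp [red]
      have h1 : φ (Finsupp.single i (a : ZMod (2 ^ (n + 1)))) = a • z i := by simp [φ]
      have h2 : Φ (Finsupp.single i 1) = b (j i) := by simp [Φ]
      rw [h1, Finsupp.mapRange.addMonoidHom_apply, Finsupp.mapRange_single, hr,
        ← Finsupp.smul_single, map_zsmul, h2, smul_comm, hz]
  refine ⟨φ, AddMonoidHom.injective_of_two_nsmul (m := n + 1) (fun y => ?_) _ fun y hy hy0 => ?_⟩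
  · ext1 i
    rw [Finsupp.smul_apply, nsmul_eq_mul, ZMod.natCast_self, zero_mul, Finsupp.zero_apply]
  · obtain ⟨c, rfl⟩ := Finsupp.exists_intCast_smul_eq (d := 2 ^ n) (e := 2)
      (pow_ne_zero (n + 1) two_ne_zero) (by push_cast; rw [pow_succ]) y
      (by simpa [two_smul] using hy)
    have hc : (((2 ^ n : ℤ)) : ZMod (2 ^ (n + 1))) • c = 2 ^ n • c := by
      ext i; simp
    rw [hc, map_nsmul, hcomp, map_eq_zero_iff Φ hΦ] at hy0
    rw [hc]
    ext i
    have hi : red (c i) = 0 := DFunLike.congr_fun hy0 i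
    obtain ⟨a, ha⟩ := ZMod.intCast_surjective (c i)
    rw [← ha] at hi
    have hi' : ((a : ℤ) : ZMod 2) = 0 := by simpa [red] using hi
    rw [ZMod.intCast_zmod_eq_zero_iff_dvd] at hi'
    rw [Finsupp.smul_apply, ← ha, Finsupp.zero_apply, nsmul_eq_mul, ← Int.cast_natCast,
      ← Int.cast_mul, ZMod.intCast_zmod_eq_zero_iff_dvd]
    push_cast
    rw [pow_succ]
    exact mul_dvd_mul_left _ hi'

theorem exists_injective_prod_of_injective {G : Type*} [AddCommGroup G] {n : ℕ}
    (φ : (ℕ →₀ ZMod (2 ^ n)) →+ G) (hφ : Injective φ) {z : G} (hz : 2 ^ n • z ≠ 0)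
    (hz2 : 2 ^ (n + 1) • z = 0) :
    ∃ f : (ℕ →₀ ZMod (2 ^ n)) × ZMod (2 ^ (n + 1)) →+ G, Injective f := by
  have hord : addOrderOf z = 2 ^ (n + 1) := addOrderOf_eq_prime_pow hz hz2
  let ζ : ZMod (2 ^ (n + 1)) →+ G := ZMod.lift _ ⟨zmultiplesHom G z, by
    rw [zmultiplesHom_apply, natCast_zsmul, hz2]⟩
  have hζ : Injective ζ := by
    refine (ZMod.lift_injective _).2 fun m hm => ?_
    rw [ZMod.intCast_zmod_eq_zero_iff_dvd, ← hord]
    exact addOrderOf_dvd_iff_zsmul_eq_zero.2 hm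
  -- shift the direct sum away from the only relation that `2 ^ n • z` can satisfy
  obtain ⟨N, hN⟩ : ∃ N : ℕ, ∀ a, φ a = 2 ^ n • z → ∀ i, N ≤ i → a i = 0 := by
    by_cases h : ∃ a, φ a = 2 ^ n • z
    · obtain ⟨a, ha⟩ := h
      obtain ⟨N, hN⟩ := a.support.bddAbove
      refine ⟨N + 1, fun a' ha' i hi => ?_⟩
      rw [hφ (ha'.trans ha.symm)]
      by_contra hne
      have := hN (Finsupp.mem_support_iff.2 hne)
      omega
    · exact ⟨0, fun a ha => (h ⟨a, ha⟩).elim⟩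
  have hs : Injective (· + N : ℕ → ℕ) := add_left_injective N
  let σ : (ℕ →₀ ZMod (2 ^ n)) →+ (ℕ →₀ ZMod (2 ^ n)) := Finsupp.mapDomain.addMonoidHom (· + N)
  have hσ : Injective σ := Finsupp.mapDomain_injective hs
  have hψ : Injective (φ.comp σ) := hφ.comp hσ
  refine ⟨(φ.comp σ).coprod ζ, AddMonoidHom.injective_of_two_nsmul (m := n + 1) ?_ _ ?_⟩
  · rintro ⟨a, m⟩
    ext i
    · have : ((2 ^ (n + 1) : ℕ) : ZMod (2 ^ n)) = 0 :=
        (ZMod.natCast_eq_zero_iff _ _).2 (pow_dvd_pow 2 n.le_succ)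
      rw [Prod.smul_fst, Finsupp.smul_apply, nsmul_eq_mul, this, zero_mul]
      rfl
    · rw [Prod.smul_snd, nsmul_eq_mul, ZMod.natCast_self, zero_mul]
      rfl
  · rintro ⟨a, m⟩ h2 h0
    have h0' : φ (σ a) + ζ m = 0 := h0
    have hm2 : 2 • m = 0 := congrArg Prod.snd h2
    have hm : m = 0 := by
      by_contra hne
      have hm' : ζ m = 2 ^ n • z := by
        obtain ⟨a, rfl⟩ := ZMod.intCast_surjective m
        have hζa : ζ (a : ZMod (2 ^ (n + 1))) = a • z := by simp [ζ]
        rw [nsmul_eq_mul, ← Int.cast_natCast, ← Int.cast_mul,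
          ZMod.intCast_zmod_eq_zero_iff_dvd] at hm2
        push_cast at hm2
        rw [pow_succ, mul_comm 2 a] at hm2
        obtain ⟨b, rfl⟩ := Int.dvd_of_mul_dvd_mul_right two_ne_zero hm2
        rw [ZMod.intCast_zmod_eq_zero_iff_dvd] at hne
        obtain ⟨c, rfl | rfl⟩ := Int.even_or_odd' b
        · exact (hne ⟨c, by push_cast; ring⟩).elim
        · have : (2 ^ n * (2 * c + 1) : ℤ) • z = c • 2 ^ (n + 1) • z + 2 ^ n • z := by
            rw [← natCast_zsmul z (2 ^ (n + 1)), ← natCast_zsmul z (2 ^ n), ← mul_smul, ← add_smul]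
            push_cast
            congr 1
            ring
          rw [hζa, this, hz2, smul_zero, zero_add]
      have hφa : φ (σ (-a)) = 2 ^ n • z := by
        rw [map_neg, map_neg, ← hm']; exact neg_eq_of_add_eq_zero_right h0'
      have ha : a = 0 := by
        ext i
        have h := hN _ hφa (i + N) (Nat.le_add_left _ _)
        have h' : σ (-a) (i + N) = (-a) i := Finsupp.mapDomain_apply hs _ _
        rw [h'] at h
        simpa using h
      rw [ha] at hφa
      simp at hφa
      exact hz hφa.symm
    subst hm
    rw [map_zero, add_zero] at h0'
    rw [(map_eq_zero_iff _ hψ).1 h0']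
    rfl

theorem two_pow_nsmul_finsupp_zmod_prod {ι : Type*} {n : ℕ}
    (h : (ι →₀ ZMod (2 ^ n)) × ZMod (2 ^ (n + 1))) :
    2 ^ n • h = 0 ∨ 2 ^ n • h = 2 ^ n • (0, 1) := by
  obtain ⟨a, c⟩ := h
  have ha : 2 ^ n • a = 0 := by
    ext1 i
    rw [Finsupp.smul_apply, nsmul_eq_mul, ZMod.natCast_self, zero_mul, Finsupp.zero_apply]
  obtain ⟨c, rfl⟩ := ZMod.intCast_surjective c
  have h2 (b : ZMod (2 ^ (n + 1))) : 2 ^ n • (2 * b) = 0 := by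
    rw [two_mul, ← two_nsmul, ← mul_smul, ← pow_succ, nsmul_eq_mul, ZMod.natCast_self, zero_mul]
  simp only [Prod.smul_mk, ha, smul_zero]
  obtain ⟨b, rfl | rfl⟩ := Int.even_or_odd' c
  · left
    push_cast
    rw [h2]
    rfl
  · right
    push_cast
    rw [smul_add, h2, zero_add]

theorem DirectSum.nonempty_addEquiv_finsupp {ι M : Type*} [AddCommMonoid M] :
    Nonempty (DirectSum ι (fun _ => M) ≃+ (ι →₀ M)) := by
  classical
  exact ⟨finsuppAddEquivDFinsupp.symm⟩

theorem exists_two_pow_nsmul_eq_zero {G : Type*} [AddCommGroup G]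
    (hexp : ∃ k : ℕ, 1 ≤ k ∧ ∀ x : G, k • x = 0)
    (hord : ∀ x : G, ∃ k : ℕ, addOrderOf x = 2 ^ k) : ∃ m : ℕ, ∀ x : G, 2 ^ m • x = 0 := by
  obtain ⟨k, hk, hG⟩ := hexp
  refine ⟨k, fun x => addOrderOf_dvd_iff_nsmul_eq_zero.1 ?_⟩
  obtain ⟨j, hj⟩ := hord x
  have hle : 2 ^ j ≤ k := Nat.le_of_dvd hk (hj ▸ addOrderOf_dvd_iff_nsmul_eq_zero.2 (hG x))
  rw [hj]
  exact pow_dvd_pow 2 (Nat.lt_two_pow_self.le.trans hle)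

/-- If `G × Q` embeds in `G` and the socle of `2 ^ n • G` is finite, then `2 ^ n • Q` vanishes. -/
theorem two_pow_nsmul_eq_zero_of_injective_prod {G Q : Type*} [AddCommGroup G] [AddCommGroup Q]
    {m n : ℕ} (hQ : ∀ q : Q, 2 ^ m • q = 0)
    (hfin : {y : G | 2 • y = 0 ∧ ∃ z, 2 ^ n • z = y}.Finite)
    (g : G × Q →+ G) (hg : Injective g) (q : Q) : 2 ^ n • q = 0 := by
  by_contra hne
  obtain ⟨k, hk, hk2⟩ := exists_two_pow_nsmul_ne_zero hne
    (by rw [smul_comm, hQ, smul_zero] : 2 ^ m • 2 ^ n • q = 0)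
  set S := {y : G | 2 • y = 0 ∧ ∃ z, 2 ^ n • z = y}
  have hmaps : Set.MapsTo (fun s => g (s, 0)) S S := by
    rintro _ ⟨h2, z, rfl⟩
    refine ⟨?_, g (z, 0), ?_⟩
    · rw [← map_nsmul, Prod.smul_mk, h2, smul_zero]; exact map_zero g
    · rw [← map_nsmul, Prod.smul_mk, smul_zero]
  have hinj : Injective fun s => g (s, 0) := fun a b h => (Prod.ext_iff.1 (hg h)).1
  have hmem : g (0, 2 ^ k • 2 ^ n • q) ∈ S := by
    refine ⟨?_, g (0, 2 ^ k • q), ?_⟩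
    · rw [← map_nsmul, Prod.smul_mk, hk2, smul_zero]; exact map_zero g
    · rw [← map_nsmul, Prod.smul_mk, smul_zero, smul_comm]
  obtain ⟨s, -, hs⟩ := ((Set.Finite.injOn_iff_bijOn_of_mapsTo hfin hmaps).1 hinj.injOn).surjOn hmem
  exact hk (Prod.ext_iff.1 (hg hs)).2.symm

theorem infinite_of_injective_prod_self {G : Type*} [AddCommGroup G] {m n : ℕ}
    (hG : ∀ y : G, 2 ^ m • y = 0) {y : G} (hy : 2 ^ n • y ≠ 0)
    (φ : G × G →+ G) (hφ : Injective φ) :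
    {y : G | 2 • y = 0 ∧ ∃ z, 2 ^ n • z = y}.Infinite := fun hfin =>
  hy (two_pow_nsmul_eq_zero_of_injective_prod hG hfin φ hφ y)

/-- A nontrivial countable abelian 2-group `G` of finite exponent is
bi-embeddable with `G × (G ⧸ ⟨x⟩)` for some involution `x` iff `G × G ↪ G` or `G` is
bi-embeddable with `(⨁_ℕ ZMod (2^n)) × ZMod (2^(n+1))` for some `n`. -/
theorem stmt_11 (G : Type) [AddCommGroup G] [Countable G] [Nontrivial G]
    (hexp : ∃ k : ℕ, 1 ≤ k ∧ ∀ x : G, k • x = 0)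
    (hord : ∀ x : G, ∃ k : ℕ, addOrderOf x = 2 ^ k) :
    (∃ x : G, x ≠ 0 ∧ x + x = 0 ∧
      (∃ f : G →+ G × (G ⧸ AddSubgroup.zmultiples x), Function.Injective f) ∧
      (∃ g : G × (G ⧸ AddSubgroup.zmultiples x) →+ G, Function.Injective g)) ↔
    ((∃ φ : G × G →+ G, Function.Injective φ) ∨
      (∃ n : ℕ,
        (∃ f : G →+ (DirectSum ℕ (fun _ => ZMod (2 ^ n))) × ZMod (2 ^ (n + 1)),
          Function.Injective f) ∧
        (∃ g : (DirectSum ℕ (fun _ => ZMod (2 ^ n))) × ZMod (2 ^ (n + 1)) →+ G,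
          Function.Injective g))) := by
  obtain ⟨m, hm⟩ := exists_two_pow_nsmul_eq_zero hexp hord
  have hm_quot (x : G) (q : G ⧸ AddSubgroup.zmultiples x) : 2 ^ m • q = 0 := by
    obtain ⟨y, rfl⟩ := QuotientAddGroup.mk_surjective q
    rw [← QuotientAddGroup.mk_nsmul, hm, QuotientAddGroup.mk_zero]
  have hcount (x : G) : Countable (G ⧸ AddSubgroup.zmultiples x) :=
    (QuotientAddGroup.mk_surjective).countable
  constructor
  · rintro ⟨x, hx, hx2, -, g, hg⟩
    have hex : ∃ n : ℕ, {y : G | 2 • y = 0 ∧ ∃ z, 2 ^ n • z = y}.Finite :=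
      ⟨m, (Set.finite_singleton 0).subset fun y ⟨_, z, hz⟩ => by rw [← hz, hm]; rfl⟩
    classical
    obtain ⟨n, hn, hmin⟩ : ∃ n : ℕ, {y : G | 2 • y = 0 ∧ ∃ z, 2 ^ n • z = y}.Finite ∧
        ∀ k < n, ¬ {y : G | 2 • y = 0 ∧ ∃ z, 2 ^ k • z = y}.Finite :=
      ⟨Nat.find hex, Nat.find_spec hex, fun k => Nat.find_min hex⟩
    obtain ⟨φ, hφ⟩ : ∃ φ : (ℕ →₀ ZMod (2 ^ n)) →+ G, Injective φ := by
      obtain _ | n := n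
      · have : Subsingleton (ZMod (2 ^ 0)) := inferInstanceAs (Subsingleton (ZMod 1))
        exact ⟨0, injective_of_subsingleton _⟩
      · exact exists_injective_of_infinite (hmin n n.lt_succ_self)
    by_cases hnG : ∀ y : G, 2 ^ n • y = 0
    · left
      obtain ⟨f, hf⟩ := exists_injective_finsupp_zmod_s11 (K := G × G) (n := n)
        fun y => Prod.ext (hnG _) (hnG _)
      exact ⟨φ.comp f, hφ.comp hf⟩
    · right
      push Not at hnG
      obtain ⟨z, hz⟩ := hnG
      have hmem (y : G) : 2 ^ n • y ∈ AddSubgroup.zmultiples x := by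
        rw [← QuotientAddGroup.eq_zero_iff, QuotientAddGroup.mk_nsmul]
        exact two_pow_nsmul_eq_zero_of_injective_prod (hm_quot x) hn g hg _
      have hz2 : 2 ^ (n + 1) • z = 0 := by
        obtain ⟨a, ha⟩ := hmem z
        rw [pow_succ', mul_smul, ← ha, smul_comm, two_nsmul, hx2, smul_zero]
      obtain ⟨e⟩ := DirectSum.nonempty_addEquiv_finsupp (ι := ℕ) (M := ZMod (2 ^ n))
      obtain ⟨f, hf⟩ := exists_injective_finsupp_zmod_prod hx hx2 hmem
      obtain ⟨h, hh⟩ := exists_injective_prod_of_injective φ hφ hz hz2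
      let E := e.prodCongr (AddEquiv.refl (ZMod (2 ^ (n + 1))))
      exact ⟨n, ⟨E.symm.toAddMonoidHom.comp f, E.symm.injective.comp hf⟩,
        h.comp E.toAddMonoidHom, hh.comp E.injective⟩
  · rintro (⟨φ, hφ⟩ | ⟨n, ⟨f, hf⟩, g, hg⟩)
    · obtain ⟨y, hy⟩ := exists_ne (0 : G)
      obtain ⟨k, hx, hx2⟩ := exists_two_pow_nsmul_ne_zero hy (hm y)
      refine ⟨2 ^ k • y, hx, by rwa [← two_nsmul], ⟨AddMonoidHom.inl _ _,
        fun a b h => (Prod.ext_iff.1 h).1⟩, ?_⟩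
      classical
      have hex : ∃ n : ℕ, ∀ y : G, 2 ^ n • y = 0 := ⟨m, hm⟩
      obtain ⟨n, hn⟩ : ∃ n, Nat.find hex = n + 1 :=
        Nat.exists_eq_succ_of_ne_zero fun h => hy (by simpa [h] using Nat.find_spec hex y)
      have hnG := Nat.find_spec hex
      rw [hn] at hnG
      obtain ⟨z, hz⟩ := not_forall.1 (Nat.find_min hex (m := n) (by omega))
      obtain ⟨ψ, hψ⟩ := exists_injective_of_infinite (infinite_of_injective_prod_self hm hz φ hφ)
      obtain ⟨f, hf⟩ := exists_injective_finsupp_zmod_s11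
        (K := G × (G ⧸ AddSubgroup.zmultiples (2 ^ k • y))) (n := n + 1) <| by
          rintro ⟨a, q⟩
          obtain ⟨b, rfl⟩ := QuotientAddGroup.mk_surjective q
          rw [Prod.smul_mk, ← QuotientAddGroup.mk_nsmul, hnG, hnG]
          rfl
      exact ⟨ψ.comp f, hψ.comp hf⟩
    · obtain ⟨e⟩ := DirectSum.nonempty_addEquiv_finsupp (ι := ℕ) (M := ZMod (2 ^ n))
      let E := e.prodCongr (AddEquiv.refl (ZMod (2 ^ (n + 1))))
      let f' := E.toAddMonoidHom.comp f
      let g' := g.comp E.symm.toAddMonoidHom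
      have hf' : Injective f' := E.injective.comp hf
      have hg' : Injective g' := hg.comp E.symm.injective
      let x := 2 ^ n • g' (0, 1)
      have hx : x ≠ 0 := by
        intro h
        have h1 : 2 ^ n • (1 : ZMod (2 ^ (n + 1))) = 0 := by
          rw [show x = g' (2 ^ n • (0, 1)) from (map_nsmul g' _ _).symm,
            map_eq_zero_iff g' hg'] at h
          exact congrArg Prod.snd h
        rw [nsmul_one, ZMod.natCast_eq_zero_iff] at h1
        exact absurd (Nat.pow_dvd_pow_iff_le_right'.1 h1) (by omega)
      have hx2 : x + x = 0 := by
        have h1 : 2 ^ (n + 1) • (1 : ZMod (2 ^ (n + 1))) = 0 := by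
          rw [nsmul_one, ZMod.natCast_self]
        rw [← two_nsmul, ← mul_smul, ← pow_succ', ← map_nsmul, Prod.smul_mk, h1, smul_zero]
        exact map_zero g'
      have hfx : f' x = 2 ^ n • (0, 1) := by
        rw [map_nsmul]
        refine (two_pow_nsmul_finsupp_zmod_prod _).resolve_left fun h => hx ?_
        rwa [← map_nsmul, map_eq_zero_iff f' hf'] at h
      have hmem (y : G) : 2 ^ n • y ∈ AddSubgroup.zmultiples x := by
        obtain h | h := two_pow_nsmul_finsupp_zmod_prod (f' y)
        · rw [← map_nsmul, map_eq_zero_iff f' hf'] at h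
          rw [h]
          exact zero_mem _
        · rw [← map_nsmul, ← hfx] at h
          rw [hf' h]
          exact AddSubgroup.mem_zmultiples x
      obtain ⟨ψ, hψ⟩ := exists_injective_finsupp_zmod_prod (n := n)
        (K := G × (G ⧸ AddSubgroup.zmultiples x)) (x := (x, 0))
        (fun h => hx (congrArg Prod.fst h)) (by rw [Prod.mk_add_mk, hx2, add_zero]; rfl) <| by
          rintro ⟨a, q⟩
          obtain ⟨b, rfl⟩ := QuotientAddGroup.mk_surjective q
          obtain ⟨c, hc⟩ := hmem a
          refine ⟨c, ?_⟩
          rw [Prod.smul_mk, ← QuotientAddGroup.mk_nsmul,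
            (QuotientAddGroup.eq_zero_iff _).2 (hmem b), ← hc]
          exact Prod.ext rfl (smul_zero c)
      exact ⟨x, hx, hx2, ⟨AddMonoidHom.inl _ _, fun a b h => (Prod.ext_iff.1 h).1⟩,
        g'.comp ψ, hg'.comp hψ⟩
end

section
/- Every countable abelian group G of finite exponent is bi-embeddable with (⨁_ℕ ZMod n) × H for some n ≥ 1 and some finite abelian group H. -/
open DirectSum

/-- A homomorphism into `ℚ/ℤ` from a group killed by `n` factors through `ZMod n`. -/
theorem exists_zmod_hom_of_addCircle_hom {N : Type*} [AddCommGroup N] {n : ℕ} (hn : 0 < n)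
    (hN : ∀ x : N, n • x = 0) (c : N →+ AddCircle (1 : ℚ)) :
    ∃ χ : N →+ ZMod n, ∀ x, χ x = 0 → c x = 0 := by
  have : Fact ((0 : ℚ) < 1) := ⟨one_pos⟩
  have hn' : (n : ℚ) ≠ 0 := by positivity
  let ι : ZMod n →+ AddCircle (1 : ℚ) := ZMod.lift n
    ⟨zmultiplesHom _ (((1 / n : ℚ) : AddCircle (1 : ℚ))), by
      have := addOrderOf_nsmul_eq_zero (((1 / n : ℚ) : AddCircle (1 : ℚ)))
      rw [AddCircle.addOrderOf_period_div hn] at this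
      simpa using this⟩
  have hι : Function.Injective ι := by
    rw [ZMod.lift_injective]
    intro m hm
    have := addOrderOf_dvd_iff_zsmul_eq_zero.2 hm
    rw [AddCircle.addOrderOf_period_div hn] at this
    exact (ZMod.intCast_zmod_eq_zero_iff_dvd m n).2 this
  have hr : ∀ x, c x ∈ ι.range := by
    intro x
    have h0 : n • c x = 0 := by rw [← map_nsmul, hN, map_zero]
    obtain ⟨m, -, hm⟩ := (AddCircle.nsmul_eq_zero_iff hn).1 h0
    refine ⟨((m : ℤ) : ZMod n), ?_⟩
    rw [← hm]
    simp only [ι, ZMod.lift_coe]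
    rw [zmultiplesHom_apply, natCast_zsmul, ← AddCircle.coe_nsmul]
    congr 1
    simp [div_eq_mul_inv]
  let e := AddMonoidHom.ofInjective hι
  refine ⟨e.symm.toAddMonoidHom.comp (c.codRestrict ι.range hr), fun x hx => ?_⟩
  have h1 : e.symm (c.codRestrict ι.range hr x) = 0 := hx
  rw [EmbeddingLike.map_eq_zero_iff] at h1
  exact congrArg Subtype.val h1

theorem exists_zmod_hom_ne_zero {N : Type*} [AddCommGroup N] {n : ℕ} (hn : 0 < n)
    (hN : ∀ x : N, n • x = 0) (B : AddSubgroup N) {a : N} (ha : a ∉ B) :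
    ∃ χ : N →+ ZMod n, (∀ b ∈ B, χ b = 0) ∧ χ a ≠ 0 := by
  have ha' : (a : N ⧸ B) ≠ 0 := by rwa [Ne, QuotientAddGroup.eq_zero_iff]
  obtain ⟨c, hc⟩ := CharacterModule.exists_character_apply_ne_zero_of_ne_zero ha'
  have hQ : ∀ x : N ⧸ B, n • x = 0 := by
    intro x
    induction x using QuotientAddGroup.induction_on with
    | H x => rw [← QuotientAddGroup.mk_nsmul, hN, QuotientAddGroup.mk_zero]
  obtain ⟨χ, hχ⟩ := exists_zmod_hom_of_addCircle_hom hn hQ c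
  refine ⟨χ.comp (QuotientAddGroup.mk' B), fun b hb => ?_, fun h => hc (hχ _ h)⟩
  simp [(QuotientAddGroup.eq_zero_iff b).2 hb]

theorem AddSubgroup.finite_closure_of_nsmul_eq_zero {G : Type*} [AddCommGroup G] {k : ℕ}
    (hk : 0 < k) (hG : ∀ x : G, k • x = 0) {s : Set G} (hs : s.Finite) :
    Finite (AddSubgroup.closure s) := by
  have : Finite s := hs
  refine AddCommGroup.finite_of_fg_isAddTorsion _ fun x => ?_
  exact isOfFinAddOrder_iff_nsmul_eq_zero.2 ⟨k, hk, Subtype.ext (by simp [hG])⟩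

theorem exists_injective_directSum_zmod {M : Type*} [AddCommGroup M] [Countable M] {n : ℕ}
    (hn : 0 < n) (hM : ∀ x : M, n • x = 0) :
    ∃ f : M →+ ⨁ _ : ℕ, ZMod n, Function.Injective f := by
  classical
  obtain ⟨enc, henc⟩ := exists_injective_nat M
  let S : ℕ → AddSubgroup M := fun i => AddSubgroup.closure {x | enc x < i}
  have hSfin : ∀ i, Finite (S i) := fun i =>
    AddSubgroup.finite_closure_of_nsmul_eq_zero hn hM
      ((Set.finite_Iio i).preimage henc.injOn)
  have hSmono : Monotone S := fun i j hij =>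
    AddSubgroup.closure_mono fun x (hx : enc x < i) => lt_of_lt_of_le hx hij
  have hSmem : ∀ x, ∃ i, x ∈ S i := fun x =>
    ⟨enc x + 1, AddSubgroup.subset_closure (Nat.lt_succ_self _)⟩
  have hχ : ∀ a : M, ∃ χ : M →+ ZMod n, (∀ i, a ∉ S i → ∀ b ∈ S i, χ b = 0) ∧
      (a ≠ 0 → χ a ≠ 0) := by
    intro a
    rcases eq_or_ne a 0 with rfl | ha
    · exact ⟨0, by simp, by simp⟩
    have hpos : Nat.find (hSmem a) ≠ 0 := by
      intro h
      have := Nat.find_spec (hSmem a)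
      rw [h] at this
      simp [S, ha] at this
    have hlt : a ∉ S (Nat.find (hSmem a) - 1) := Nat.find_min (hSmem a) (by omega)
    obtain ⟨χ, h1, h2⟩ := exists_zmod_hom_ne_zero hn hM _ hlt
    refine ⟨χ, fun i hi b hb => h1 b (hSmono ?_ hb), fun _ => h2⟩
    by_contra hcon
    exact hi (hSmono (by omega) (Nat.find_spec (hSmem a)))
  choose χ hχ1 hχ2 using hχ
  let F : M → ℕ → ZMod n := fun x i => if h : ∃ a, enc a = i then χ h.choose x else 0
  have hFenc : ∀ x a, F x (enc a) = χ a x := by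
    intro x a
    have h : ∃ b, enc b = enc a := ⟨a, rfl⟩
    simp only [F, dif_pos h, henc h.choose_spec]
  have hFadd : ∀ x y i, F (x + y) i = F x i + F y i := by
    intro x y i
    simp only [F]
    split_ifs <;> simp
  have hFfin : ∀ x, (Function.support (F x)).Finite := by
    intro x
    obtain ⟨i, hi⟩ := hSmem x
    have : Finite (S i) := hSfin i
    refine ((S i : Set M).toFinite.image enc).subset fun j hj => ?_
    by_cases h : ∃ a, enc a = j
    · obtain ⟨a, rfl⟩ := h
      refine ⟨a, ?_, rfl⟩
      by_contra ha
      exact hj (by rw [hFenc]; exact hχ1 a i ha x hi)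
    · exact absurd (dif_neg h) hj
  let f : M → ⨁ _ : ℕ, ZMod n := fun x =>
    DirectSum.mk (fun _ => ZMod n) (hFfin x).toFinset fun i => F x i
  have hf : ∀ x i, f x i = F x i := by
    intro x i
    by_cases hi : i ∈ (hFfin x).toFinset
    · exact DirectSum.mk_apply_of_mem hi
    · refine (DirectSum.mk_apply_of_notMem hi).trans ?_
      simpa [eq_comm] using hi
  refine ⟨AddMonoidHom.mk' f fun x y => ?_, ?_⟩
  · ext i
    rw [DirectSum.add_apply, hf, hf, hf, hFadd]
  · rw [injective_iff_map_eq_zero]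
    intro x hx
    by_contra hne
    apply hχ2 x hne
    rw [← hFenc, ← hf]
    exact DFunLike.congr_fun hx _

/-- Groups of finite exponent are residually finite. -/
theorem exists_finite_hom_injOn {G : Type} [AddCommGroup G] {k : ℕ} (hk : 0 < k)
    (hG : ∀ x : G, k • x = 0) (A : AddSubgroup G) [Finite A] :
    ∃ (P : Type) (_ : AddCommGroup P) (_ : Finite P) (φ : G →+ P), ∀ a ∈ A, φ a = 0 → a = 0 := by
  have : NeZero k := ⟨hk.ne'⟩
  have h : ∀ a : A, ∃ χ : G →+ ZMod k, (a : G) ≠ 0 → χ a ≠ 0 := by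
    intro a
    by_cases ha : (a : G) = 0
    · exact ⟨0, fun h => absurd ha h⟩
    · obtain ⟨χ, -, hχ⟩ := exists_zmod_hom_ne_zero hk hG ⊥ (a := (a : G)) (by simpa using ha)
      exact ⟨χ, fun _ => hχ⟩
  choose χ hχ using h
  refine ⟨A → ZMod k, inferInstance, inferInstance, AddMonoidHom.pi χ, fun a ha h0 => ?_⟩
  by_contra hne
  exact hχ ⟨a, ha⟩ hne (congrFun h0 _)

/-- A quotient of a finite abelian group embeds into it. -/
theorem CommGroup.exists_injective_of_surjective {A Q : Type*} [CommGroup A] [CommGroup Q]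
    [Finite A] (π : A →* Q) (hπ : Function.Surjective π) :
    ∃ i : Q →* A, Function.Injective i := by
  have : Finite Q := Finite.of_surjective π hπ
  obtain ⟨eA⟩ := CommGroup.monoidHom_mulEquiv_of_hasEnoughRootsOfUnity A ℂ
  obtain ⟨eQ⟩ := CommGroup.monoidHom_mulEquiv_of_hasEnoughRootsOfUnity Q ℂ
  refine ⟨eA.toMonoidHom.comp ((MonoidHom.compHom' π).comp eQ.symm.toMonoidHom), ?_⟩
  have hcomp : Function.Injective (MonoidHom.compHom' (P := ℂˣ) π) :=
    fun _ _ h => (MonoidHom.cancel_right hπ).1 h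
  exact eA.injective.comp (hcomp.comp eQ.symm.injective)

theorem AddCommGroup.exists_injective_of_surjective {A Q : Type*} [AddCommGroup A]
    [AddCommGroup Q] [Finite A] (π : A →+ Q) (hπ : Function.Surjective π) :
    ∃ i : Q →+ A, Function.Injective i := by
  obtain ⟨i, hi⟩ := CommGroup.exists_injective_of_surjective (AddMonoidHom.toMultiplicative π) hπ
  exact ⟨AddMonoidHom.toMultiplicative.symm i, hi⟩

theorem exists_injective_of_finite_of_surjective {G Q : Type*} [AddCommGroup G] [AddCommGroup Q]
    [Finite Q] {k : ℕ} (hk : 0 < k) (hG : ∀ x : G, k • x = 0) (π : G →+ Q)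
    (hπ : Function.Surjective π) : ∃ i : Q →+ G, Function.Injective i := by
  have : Finite (AddSubgroup.closure (Set.range (Function.surjInv hπ))) :=
    AddSubgroup.finite_closure_of_nsmul_eq_zero hk hG (Set.finite_range _)
  set A := AddSubgroup.closure (Set.range (Function.surjInv hπ))
  obtain ⟨i, hi⟩ := AddCommGroup.exists_injective_of_surjective (π.comp A.subtype) fun q =>
    ⟨⟨_, AddSubgroup.subset_closure ⟨q, rfl⟩⟩, Function.surjInv_eq hπ q⟩
  exact ⟨A.subtype.comp i, Subtype.val_injective.comp hi⟩

/-- Some `n > 0` with `n • G` finite divides every `m` such that `m • G` is finite. -/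
theorem exists_nsmul_finite_and_dvd {G : Type*} [AddCommGroup G] {k : ℕ} (hk : 0 < k)
    (hG : ∀ x : G, k • x = 0) :
    ∃ n : ℕ, 0 < n ∧ (Set.range fun x : G => n • x).Finite ∧
      ∀ m : ℕ, (Set.range fun x : G => m • x).Finite → n ∣ m := by
  classical
  have hex : ∃ n : ℕ, 0 < n ∧ (Set.range fun x : G => n • x).Finite :=
    ⟨k, hk, (Set.finite_singleton 0).subset (by rintro _ ⟨x, rfl⟩; exact hG x)⟩
  obtain ⟨hpos, hfin⟩ := Nat.find_spec hex
  refine ⟨Nat.find hex, hpos, hfin, fun m hm => ?_⟩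
  have hg : (Set.range fun x : G => (Nat.gcd (Nat.find hex) m) • x).Finite := by
    refine (hfin.add hm).subset ?_
    rintro _ ⟨x, rfl⟩
    refine ⟨_, ⟨Nat.gcdA (Nat.find hex) m • x, rfl⟩, _, ⟨Nat.gcdB (Nat.find hex) m • x, rfl⟩, ?_⟩
    simp only [← natCast_zsmul, smul_smul, ← add_smul, Nat.gcd_eq_gcd_ab]
  have hle := Nat.find_min' hex ⟨Nat.gcd_pos_of_pos_left m hpos, hg⟩
  rw [← le_antisymm (Nat.gcd_le_left m hpos) hle]
  exact Nat.gcd_dvd_right _ _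

theorem exists_nsmul_eq_zero_and_dvd_of_zsmul_mem {G : Type} [AddCommGroup G] {k n : ℕ}
    (hk : 0 < k) (hG : ∀ x : G, k • x = 0)
    (hn : ∀ m : ℕ, (Set.range fun x : G => m • x).Finite → n ∣ m)
    (B : AddSubgroup G) [Finite B] :
    ∃ x : G, n • x = 0 ∧ ∀ m : ℤ, m • x ∈ B → (n : ℤ) ∣ m := by
  obtain ⟨P, _, _, φ, hφ⟩ := exists_finite_hom_injOn hk hG B
  have hexp : AddMonoid.ExponentExists φ.ker := ⟨k, hk, fun x => Subtype.ext (by simp [hG])⟩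
  obtain ⟨y, hy⟩ := AddMonoid.exists_addOrderOf_eq_exponent hexp
  have hdvd : n ∣ AddMonoid.exponent φ.ker := by
    apply hn
    have hfac : ∀ x y, φ x = φ y →
        AddMonoid.exponent φ.ker • x = AddMonoid.exponent φ.ker • y := by
      intro x y hxy
      have h : x - y ∈ φ.ker := by rw [AddMonoidHom.mem_ker, map_sub, hxy, sub_self]
      have := congrArg Subtype.val (AddMonoid.exponent_nsmul_eq_zero (⟨x - y, h⟩ : φ.ker))
      rw [← sub_eq_zero, ← nsmul_sub]
      exact this
    have hinj : Function.Injective fun z : Set.range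
        (fun x : G => AddMonoid.exponent φ.ker • x) => φ z.2.choose := by
      intro z w hzw
      ext
      rw [← z.2.choose_spec, ← w.2.choose_spec]
      exact hfac _ _ hzw
    exact Finite.of_injective _ hinj
  obtain ⟨d, hd⟩ := hdvd
  have hd0 : d ≠ 0 := by
    rintro rfl
    exact hexp.exponent_ne_zero (by simpa using hd)
  refine ⟨d • (y : G), ?_, fun m hm => ?_⟩
  · rw [smul_smul, ← hd, ← hy]
    exact congrArg Subtype.val (addOrderOf_nsmul_eq_zero y)
  · have h0 : m • d • (y : G) = 0 := by
      apply hφ _ hm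
      rw [map_zsmul, map_nsmul, (AddMonoidHom.mem_ker).1 y.2, smul_zero, smul_zero]
    have h1 : (m * d) • y = 0 := by
      ext
      simpa [mul_smul] using h0
    have h2 := addOrderOf_dvd_iff_zsmul_eq_zero.2 h1
    rw [hy, hd, Nat.cast_mul] at h2
    exact Int.dvd_of_mul_dvd_mul_right (by exact_mod_cast hd0) h2

theorem exists_injective_directSum_prod {G H : Type*} [AddCommGroup G] [AddCommGroup H] [Finite H]
    {k n : ℕ} (hk : 0 < k) (hG : ∀ x : G, k • x = 0)
    (hn : ∀ B : AddSubgroup G, Finite B → ∃ x : G, n • x = 0 ∧ ∀ m : ℤ, m • x ∈ B → (n : ℤ) ∣ m)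
    (i : H →+ G) (hi : Function.Injective i) :
    ∃ g : (⨁ _ : ℕ, ZMod n) × H →+ G, Function.Injective g := by
  classical
  choose pick hpick0 hpick using hn
  have hrange : Finite i.range := inferInstanceAs (Finite (Set.range i))
  let S : ℕ → {B : AddSubgroup G // Finite B} := fun j => Nat.rec ⟨i.range, hrange⟩
    (fun _ B => ⟨AddSubgroup.closure (insert (pick B.1 B.2) (B.1 : Set G)),
      haveI := B.2
      AddSubgroup.finite_closure_of_nsmul_eq_zero hk hG ((Set.toFinite _).insert _)⟩) j
  have hSsucc : ∀ j, (S (j + 1)).1 =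
      AddSubgroup.closure (insert (pick (S j).1 (S j).2) ((S j).1 : Set G)) := fun _ => rfl
  have hSmono : Monotone fun j => (S j).1 := monotone_nat_of_le_succ fun j x hx => by
    rw [hSsucc]
    exact AddSubgroup.subset_closure (Set.mem_insert_of_mem _ hx)
  let φ : ℕ → ZMod n →+ G := fun j => ZMod.lift n
    ⟨zmultiplesHom _ (pick (S j).1 (S j).2), by simpa using hpick0 _ _⟩
  have hφcoe : ∀ j (m : ℤ), φ j m = m • pick (S j).1 (S j).2 := fun j m => by simp [φ]
  have hφmem : ∀ j z, φ j z ∈ (S (j + 1)).1 := by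
    intro j z
    obtain ⟨m, rfl⟩ := ZMod.intCast_surjective z
    rw [hφcoe, hSsucc]
    exact AddSubgroup.zsmul_mem _ (AddSubgroup.subset_closure (Set.mem_insert _ _)) _
  have hφzero : ∀ j z, φ j z ∈ (S j).1 → z = 0 := by
    intro j z hz
    obtain ⟨m, rfl⟩ := ZMod.intCast_surjective z
    rw [hφcoe] at hz
    exact (ZMod.intCast_zmod_eq_zero_iff_dvd m n).2 (hpick _ _ m hz)
  have hker : ∀ v : ⨁ _ : ℕ, ZMod n, DirectSum.toAddMonoid φ v ∈ i.range → v = 0 := by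
    intro v hv
    by_contra hne
    have hsupp : v.support.Nonempty := by
      rw [Finset.nonempty_iff_ne_empty]
      exact fun h => hne (DFinsupp.support_eq_empty.1 h)
    have hmax := v.support.max'_mem hsupp
    set j := v.support.max' hsupp
    have hsum : DirectSum.toAddMonoid φ v = ∑ l ∈ v.support, φ l (v l) :=
      DFinsupp.sumAddHom_apply φ v
    rw [hsum, ← Finset.add_sum_erase _ _ hmax] at hv
    have hrest : ∑ l ∈ v.support.erase j, φ l (v l) ∈ (S j).1 := by
      refine AddSubgroup.sum_mem _ fun l hl => ?_
      have hlt : l < j := Finset.lt_max'_of_mem_erase_max' _ hsupp hl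
      exact hSmono (Nat.succ_le_of_lt hlt) (hφmem l _)
    have := (AddSubgroup.add_mem_cancel_right _ hrest).1 (hSmono (Nat.zero_le j) hv)
    exact (DFinsupp.mem_support_iff.1 hmax) (hφzero j _ this)
  refine ⟨(DirectSum.toAddMonoid φ).coprod i, ?_⟩
  rw [injective_iff_map_eq_zero]
  rintro ⟨v, h⟩ hvh
  rw [AddMonoidHom.coprod_apply] at hvh
  have hv : v = 0 := hker v ⟨-h, by rw [map_neg, eq_comm, eq_neg_iff_add_eq_zero]; exact hvh⟩
  subst hv
  rw [map_zero, zero_add] at hvh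
  rw [(injective_iff_map_eq_zero i).1 hi h hvh]
  rfl

/-- Every countable abelian group of finite exponent is bi-embeddable with
`(⨁_ℕ ZMod n) × H` for some `n ≥ 1` and some finite abelian group `H`. -/
theorem stmt_13 (G : Type) [AddCommGroup G] [Countable G]
    (hexp : ∃ k : ℕ, 1 ≤ k ∧ ∀ x : G, k • x = 0) :
    ∃ (n : ℕ) (H : Type) (instH : AddCommGroup H), 1 ≤ n ∧ Finite H ∧
      (letI := instH
       (∃ f : G →+ (DirectSum ℕ (fun _ => ZMod n)) × H, Function.Injective f) ∧
       (∃ g : (DirectSum ℕ (fun _ => ZMod n)) × H →+ G, Function.Injective g)) := by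
  obtain ⟨k, hk, hG⟩ := hexp
  obtain ⟨n, hn, hfin, hdvd⟩ := exists_nsmul_finite_and_dvd hk hG
  let N : AddSubgroup G := (nsmulAddMonoidHom n : G →+ G).range
  have hN : Finite N := hfin
  obtain ⟨P, _, _, φ, hφ⟩ := exists_finite_hom_injOn hk hG N
  have hQ : ∀ x : G ⧸ N, n • x = 0 := by
    intro x
    induction x using QuotientAddGroup.induction_on with
    | H x =>
      rw [← QuotientAddGroup.mk_nsmul, QuotientAddGroup.eq_zero_iff]
      exact ⟨x, rfl⟩
  have hcount : Countable (G ⧸ N) := (QuotientAddGroup.mk_surjective).countable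
  obtain ⟨ψ, hψ⟩ := exists_injective_directSum_zmod hn hQ
  have hrange : Finite φ.range := inferInstance
  obtain ⟨i, hi⟩ := exists_injective_of_finite_of_surjective hk hG φ.rangeRestrict
    φ.rangeRestrict_surjective
  refine ⟨n, φ.range, inferInstance, hn, hrange,
    ⟨(ψ.comp (QuotientAddGroup.mk' N)).prod φ.rangeRestrict, ?_⟩,
    exists_injective_directSum_prod hk hG
      (fun B _ => exists_nsmul_eq_zero_and_dvd_of_zsmul_mem hk hG hdvd B) i hi⟩
  rw [injective_iff_map_eq_zero]
  intro x hx
  obtain ⟨h1, h2⟩ := Prod.ext_iff.1 hx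
  refine hφ x ?_ (congrArg Subtype.val h2)
  exact (QuotientAddGroup.eq_zero_iff x).1 ((injective_iff_map_eq_zero ψ).1 hψ _ h1)
end
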